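/- arXiv:2011.01592 — 2 statements merged into one kernel-verified Lean document; each statement's English description precedes it below -/
import Mathlib

section
/- For every integer k ≥ 2, we have g^k_2(5) = 2^k + 1; that is, every Gallai-k-coloring of K_{2^k+1} contains a set of 5 vertices spanning edges in at most 2 colors, and there exists a Gallai-k-coloring of K_{2^k} in which every set of 5 vertices spans edges in at least 3 colors. -/
open Finset

/-- A Gallai coloring: a symmetric edge-coloring of the complete graph on `V`
with no rainbow triangle. -/
def IsGallai {V β : Type*} (c : V → V → β) : Prop :=
  (∀ a b, c a b = c b a) ∧
  ∀ a b d : V, a ≠ b → a ≠ d → b ≠ d →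
    ¬(c a b ≠ c a d ∧ c a b ≠ c b d ∧ c a d ≠ c b d)

/-- The set of colors appearing on edges inside the vertex set `S`. -/
def colorsOn {V β : Type*} [DecidableEq V] [DecidableEq β]
    (c : V → V → β) (S : Finset V) : Finset β :=
  ((S ×ˢ S).filter fun p => p.1 ≠ p.2).image fun p => c p.1 p.2

/-- `gallaiNum k q p` is the smallest positive `n` such that every Gallai-`k`-coloring
of `K_n` contains a set of `p` vertices whose induced edges use at most `q` colors. -/
noncomputable def gallaiNum (k q p : ℕ) : ℕ :=
  sInf {n : ℕ | 0 < n ∧ ∀ c : Fin n → Fin n → Fin k, IsGallai c →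
    ∃ S : Finset (Fin n), S.card = p ∧ (colorsOn c S).card ≤ q}

/-- All edges of `X` have a color satisfying `P`. -/
def Cl {V β : Type*} (c : V → V → β) (P : β → Prop) (X : Finset V) : Prop :=
  ∀ x ∈ X, ∀ y ∈ X, x ≠ y → P (c x y)

open Classical in
/-- Largest size of a subset of `W` all of whose edges satisfy `P`. -/
noncomputable def om {V β : Type*} (c : V → V → β) (P : β → Prop) (W : Finset V) : ℕ :=
  (W.powerset.filter fun X => Cl c P X).sup Finset.card

theorem le_om {V β : Type*} {c : V → V → β} {P : β → Prop} {W X : Finset V}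
    (hX : X ⊆ W) (h : Cl c P X) : X.card ≤ om c P W := by
  classical
  unfold om
  exact Finset.le_sup (f := Finset.card) (by simp [hX, h])

theorem exists_om {V β : Type*} (c : V → V → β) (P : β → Prop) (W : Finset V) :
    ∃ X ⊆ W, Cl c P X ∧ X.card = om c P W := by
  classical
  have hne : (W.powerset.filter fun X => Cl c P X).Nonempty :=
    ⟨∅, Finset.mem_filter.2 ⟨by simp, by intro x hx; simp at hx⟩⟩
  obtain ⟨X, hX, he⟩ := Finset.exists_mem_eq_sup _ hne Finset.card
  simp only [Finset.mem_filter, Finset.mem_powerset] at hX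
  refine ⟨X, hX.1, hX.2, ?_⟩
  rw [← he]; unfold om; congr

theorem om_mono {V β : Type*} {c : V → V → β} {P : β → Prop} {W W' : Finset V}
    (h : W ⊆ W') : om c P W ≤ om c P W' := by
  obtain ⟨X, hX, hc, he⟩ := exists_om c P W
  rw [← he]
  exact le_om (hX.trans h) hc

theorem om_union {V β : Type*} [DecidableEq V] {c : V → V → β} (hs : ∀ a b, c a b = c b a)
    {P : β → Prop} {A B W : Finset V}
    (hA : A ⊆ W) (hB : B ⊆ W) (hd : Disjoint A B) (h : ∀ a ∈ A, ∀ b ∈ B, P (c a b)) :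
    om c P A + om c P B ≤ om c P W := by
  obtain ⟨X, hX, hc, he⟩ := exists_om c P A
  obtain ⟨Y, hY, hc', he'⟩ := exists_om c P B
  rw [← he, ← he', ← Finset.card_union_of_disjoint (Finset.disjoint_of_subset_left hX
    (Finset.disjoint_of_subset_right hY hd))]
  refine le_om (Finset.union_subset (hX.trans hA) (hY.trans hB)) ?_
  intro x hx y hy hxy
  rw [Finset.mem_union] at hx hy
  rcases hx with hx | hx <;> rcases hy with hy | hy
  · exact hc x hx y hy hxy
  · exact h x (hX hx) y (hY hy)
  · rw [hs]; exact h y (hX hy) x (hY hx)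
  · exact hc' x hx y hy hxy

/-- `W` splits into two parts with only color `i` in between. -/
structure Sp2 {V β : Type*} [DecidableEq V] (c : V → V → β) (W A B : Finset V) (i : β) : Prop where
  un : W = A ∪ B
  dj : Disjoint A B
  nA : A.Nonempty
  nB : B.Nonempty
  col : ∀ a ∈ A, ∀ b ∈ B, c a b = i

/-- `W` splits into four parts forming a path in color `i` and a path in color `j`. -/
structure Sp4 {V β : Type*} [DecidableEq V] (c : V → V → β) (W A B C D : Finset V) (i j : β) :
    Prop where
  ij : i ≠ j
  un : ∀ x, x ∈ W ↔ x ∈ A ∨ x ∈ B ∨ x ∈ C ∨ x ∈ D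
  dAB : Disjoint A B
  dAC : Disjoint A C
  dAD : Disjoint A D
  dBC : Disjoint B C
  dBD : Disjoint B D
  dCD : Disjoint C D
  nA : A.Nonempty
  nB : B.Nonempty
  nC : C.Nonempty
  nD : D.Nonempty
  AB : ∀ a ∈ A, ∀ b ∈ B, c a b = i
  BC : ∀ a ∈ B, ∀ b ∈ C, c a b = i
  CD : ∀ a ∈ C, ∀ b ∈ D, c a b = i
  AC : ∀ a ∈ A, ∀ b ∈ C, c a b = j
  AD : ∀ a ∈ A, ∀ b ∈ D, c a b = j
  BD : ∀ a ∈ B, ∀ b ∈ D, c a b = j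

theorem Sp4.flip {V β : Type*} [DecidableEq V] {c : V → V → β} (hs : ∀ a b, c a b = c b a)
    {W A B C D : Finset V} {i j : β} (h : Sp4 c W A B C D i j) : Sp4 c W D C B A i j where
  ij := h.ij
  un x := by rw [h.un]; tauto
  dAB := h.dCD.symm
  dAC := h.dBD.symm
  dAD := h.dAD.symm
  dBC := h.dBC.symm
  dBD := h.dAC.symm
  dCD := h.dAB.symm
  nA := h.nD
  nB := h.nC
  nC := h.nB
  nD := h.nA
  AB a ha b hb := by rw [hs]; exact h.CD b hb a ha
  BC a ha b hb := by rw [hs]; exact h.BC b hb a ha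
  CD a ha b hb := by rw [hs]; exact h.AB b hb a ha
  AC a ha b hb := by rw [hs]; exact h.BD b hb a ha
  AD a ha b hb := by rw [hs]; exact h.AD b hb a ha
  BD a ha b hb := by rw [hs]; exact h.AC b hb a ha

theorem Sp4.swap {V β : Type*} [DecidableEq V] {c : V → V → β} (hs : ∀ a b, c a b = c b a)
    {W A B C D : Finset V} {i j : β} (h : Sp4 c W A B C D i j) : Sp4 c W B D A C j i where
  ij := h.ij.symm
  un x := by rw [h.un]; tauto
  dAB := h.dBD
  dAC := h.dAB.symm
  dAD := h.dBC
  dBC := h.dAD.symm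
  dBD := h.dCD.symm
  dCD := h.dAC
  nA := h.nB
  nB := h.nD
  nC := h.nA
  nD := h.nC
  AB := h.BD
  BC a ha b hb := by rw [hs]; exact h.AD b hb a ha
  CD := h.AC
  AC a ha b hb := by rw [hs]; exact h.AB b hb a ha
  AD := h.BC
  BD a ha b hb := by rw [hs]; exact h.CD b hb a ha

section

variable {V β : Type*} [DecidableEq V] {c : V → V → β}

theorem no5 (hs : ∀ a b, c a b = c b a)
    (h5 : ∀ i j, ∀ S : Finset V, Cl c (fun t => t = i ∨ t = j) S → S.card ≤ 4)
    (i j : β) (p q r s t : V) (d : [p, q, r, s, t].Nodup)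
    (h : [p, q, r, s, t].Pairwise (fun x y => c x y = i ∨ c x y = j)) : False := by
  have := h5 i j [p, q, r, s, t].toFinset (by
    intro x hx y hy hxy
    simp only [List.mem_toFinset] at hx hy
    have : Std.Symm (fun x y => c x y = i ∨ c x y = j) :=
      ⟨by intro x y h; rw [hs]; exact h⟩
    exact List.Pairwise.forall h hx hy hxy)
  rw [List.toFinset_card_of_nodup d] at this
  simp at this


/-- Gallai condition in disjunctive form. -/
def Gal (c : V → V → β) : Prop :=
  ∀ a b d : V, a ≠ b → a ≠ d → b ≠ d → c a b = c a d ∨ c a b = c b d ∨ c a d = c b d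

/-- `W` has a decomposition. -/
def Dec (c : V → V → β) (W : Finset V) : Prop :=
  (∃ A B i, Sp2 c W A B i) ∨ ∃ A B C D i j, Sp4 c W A B C D i j

theorem Sp2.symm (hs : ∀ a b, c a b = c b a) {W A B : Finset V} {i : β}
    (h : Sp2 c W A B i) : Sp2 c W B A i where
  un := by rw [h.un, Finset.union_comm]
  dj := h.dj.symm
  nA := h.nB
  nB := h.nA
  col a ha b hb := by rw [hs]; exact h.col b hb a ha

theorem add2_core (hs : ∀ a b, c a b = c b a) (hg : Gal c)
    (h5 : ∀ i j, ∀ S : Finset V, Cl c (fun t => t = i ∨ t = j) S → S.card ≤ 4)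
    {U A B : Finset V} {i x : β} {v : V} (hv : v ∉ U) (h : Sp2 c U A B i) (hx : x ≠ i)
    (hB : ∀ b ∈ B, c v b = x) (hA : ∀ a ∈ A, c v a = i ∨ c v a = x)
    (a0 : V) (ha0 : a0 ∈ A) (hxa : c v a0 = x) : Dec c (insert v U) := by
  classical
  obtain ⟨b, hb⟩ := h.nB
  have hU : ∀ y, y ∈ U ↔ y ∈ A ∨ y ∈ B := by intro y; rw [h.un, Finset.mem_union]
  have hdis : ∀ y, y ∈ A → y ∈ B → False := fun y h1 h2 => Finset.disjoint_left.1 h.dj h1 h2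
  have hcol := h.col
  by_cases hA1 : ∀ a ∈ A, c v a = x
  · left
    refine ⟨{v}, U, x, ?_, by simpa using hv, by simp, ⟨b, by rw [hU]; exact Or.inr hb⟩, ?_⟩
    · ext y; simp
    · intro a ha y hy
      rw [Finset.mem_singleton] at ha
      subst ha
      rcases (hU y).1 hy with h1 | h1
      · exact hA1 y h1
      · exact hB y h1
  push Not at hA1
  obtain ⟨a1, ha1, hne⟩ := hA1
  have hia : c v a1 = i := (hA a1 ha1).resolve_right hne
  have hvA : ∀ a ∈ A, v ≠ a := by rintro a ha rfl; exact hv ((hU _).2 (Or.inl ha))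
  have hvB : ∀ a ∈ B, v ≠ a := by rintro a ha rfl; exact hv ((hU _).2 (Or.inr ha))
  have hmix : ∀ a ∈ A, ∀ a' ∈ A, c v a = i → c v a' = x → c a a' = i ∨ c a a' = x := by
    intro a ha a' ha' h1 h2
    have := hg v a a' (hvA a ha) (hvA a' ha') (by rintro rfl; exact hx (h2.symm.trans h1))
    grind
  have k1 : ∀ a ∈ A, ∀ a' ∈ A, ∀ a'' ∈ A, c v a = i → c v a' = i → c v a'' = x →
      c a a'' = c a' a'' := by
    intro a ha a' ha' a'' ha'' h1 h2 h3
    by_cases hn : a = a'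
    · rw [hn]
    by_contra hcon
    have m1 := hmix a ha a'' ha'' h1 h3
    have m2 := hmix a' ha' a'' ha'' h2 h3
    have n1 : a ≠ a'' := by rintro rfl; exact hx (h3.symm.trans h1)
    have n2 : a' ≠ a'' := by rintro rfl; exact hx (h3.symm.trans h2)
    have g := hg a a' a'' hn n1 n2
    have hvb := hvB b hb
    have := hvA a ha
    have := hvA a' ha'
    have := hvA a'' ha''
    have := hcol a ha b hb
    have := hcol a' ha' b hb
    have := hcol a'' ha'' b hb
    have := hB b hb
    refine no5 hs h5 i x v b a a' a'' ?_ ?_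
    · simp; grind
    · simp; grind
  have k2 : ∀ a ∈ A, ∀ a' ∈ A, ∀ a'' ∈ A, c v a = i → c v a' = x → c v a'' = x →
      c a a' = c a a'' := by
    intro a ha a' ha' a'' ha'' h1 h2 h3
    by_cases hn : a' = a''
    · rw [hn]
    by_contra hcon
    have m1 := hmix a ha a'' ha'' h1 h3
    have m2 := hmix a ha a' ha' h1 h2
    have n1 : a ≠ a'' := by rintro rfl; exact hx (h3.symm.trans h1)
    have n2 : a ≠ a' := by rintro rfl; exact hx (h2.symm.trans h1)
    have g := hg a a' a'' n2 n1 hn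
    have hvb := hvB b hb
    have := hvA a ha
    have := hvA a' ha'
    have := hvA a'' ha''
    have := hcol a ha b hb
    have := hcol a' ha' b hb
    have := hcol a'' ha'' b hb
    have := hB b hb
    refine no5 hs h5 i x v b a a' a'' ?_ ?_
    · simp; grind
    · simp; grind
  have k3 : ∀ a ∈ A, ∀ a' ∈ A, c v a = i → c v a' = x → c a a' = c a1 a0 := by
    intro a ha a' ha' h1 h2
    rw [k1 a ha a1 ha1 a' ha' h1 hia h2]
    exact k2 a1 ha1 a' ha' a0 ha0 hia h2 hxa
  rcases hmix a1 ha1 a0 ha0 hia hxa with ht | ht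
  · left
    refine ⟨A.filter (fun a => c v a = i), insert v (A.filter (fun a => c v a = x) ∪ B), i,
      ?_, ?_, ⟨a1, by simp [ha1, hia]⟩, by simp, ?_⟩
    · ext y
      simp only [Finset.mem_insert, hU, Finset.mem_union, Finset.mem_filter]
      grind
    · rw [Finset.disjoint_left]
      simp only [Finset.mem_insert, Finset.mem_union, Finset.mem_filter]
      grind
    · simp only [Finset.mem_insert, Finset.mem_union, Finset.mem_filter]
      grind
  · right
    refine ⟨{v}, A.filter (fun a => c v a = i), B, A.filter (fun a => c v a = x), i, x, ?_⟩
    constructor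
    · exact hx.symm
    · simp only [Finset.mem_insert, hU, Finset.mem_singleton, Finset.mem_filter]
      grind
    · simp only [Finset.disjoint_left, Finset.mem_singleton, Finset.mem_filter]; grind
    · simp only [Finset.disjoint_left, Finset.mem_singleton, Finset.mem_filter]; grind
    · simp only [Finset.disjoint_left, Finset.mem_singleton, Finset.mem_filter]; grind
    · simp only [Finset.disjoint_left, Finset.mem_singleton, Finset.mem_filter]; grind
    · simp only [Finset.disjoint_left, Finset.mem_singleton, Finset.mem_filter]; grind
    · simp only [Finset.disjoint_left, Finset.mem_singleton, Finset.mem_filter]; grind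
    · simp
    · exact ⟨a1, by simp [ha1, hia]⟩
    · exact h.nB
    · exact ⟨a0, by simp [ha0, hxa]⟩
    all_goals
      simp only [Finset.mem_singleton, Finset.mem_filter]
      grind

theorem add2 (hs : ∀ a b, c a b = c b a) (hg : Gal c)
    (h5 : ∀ i j, ∀ S : Finset V, Cl c (fun t => t = i ∨ t = j) S → S.card ≤ 4)
    {U A B : Finset V} {i : β} {v : V} (hv : v ∉ U) (h : Sp2 c U A B i) :
    Dec c (insert v U) := by
  have hU : ∀ y, y ∈ U ↔ y ∈ A ∨ y ∈ B := by intro y; rw [h.un, Finset.mem_union]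
  have hdis := Finset.disjoint_left.1 h.dj
  have hcol := h.col
  by_cases hA : ∀ a ∈ A, c v a = i
  · left
    refine ⟨A, insert v B, i, ?_, ?_, h.nA, by simp, ?_⟩
    · ext y; simp only [Finset.mem_insert, Finset.mem_union, hU]; tauto
    · simp only [Finset.disjoint_left, Finset.mem_insert]; grind
    · simp only [Finset.mem_insert]; grind
  by_cases hB : ∀ a ∈ B, c v a = i
  · left
    refine ⟨B, insert v A, i, ?_, ?_, h.nB, by simp, ?_⟩
    · ext y; simp only [Finset.mem_insert, Finset.mem_union, hU]; tauto
    · simp only [Finset.disjoint_left, Finset.mem_insert]; grind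
    · simp only [Finset.mem_insert]; grind
  push Not at hA hB
  obtain ⟨a0, ha0, hna⟩ := hA
  obtain ⟨b0, hb0, hnb⟩ := hB
  have hvA : ∀ a ∈ A, v ≠ a := by rintro a ha rfl; exact hv ((hU _).2 (Or.inl ha))
  have hvB : ∀ a ∈ B, v ≠ a := by rintro a ha rfl; exact hv ((hU _).2 (Or.inr ha))
  have hAB : ∀ a ∈ A, ∀ b ∈ B, a ≠ b := by rintro a ha b hb rfl; exact hdis ha hb
  have tri : ∀ a ∈ A, ∀ b ∈ B, c v a = c v b ∨ c v a = i ∨ c v b = i := by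
    intro a ha b hb
    have := hg v a b (hvA a ha) (hvB b hb) (hAB a ha b hb)
    rwa [hcol a ha b hb] at this
  obtain ⟨x, hx⟩ : ∃ x, c v a0 = x := ⟨_, rfl⟩
  have hxi : x ≠ i := by rw [← hx]; exact hna
  have hB' : ∀ b ∈ B, c v b = i ∨ c v b = x := by
    intro b hb; have := tri a0 ha0 b hb; grind
  have hbx : c v b0 = x := by grind
  have hA' : ∀ b ∈ A, c v b = i ∨ c v b = x := by
    intro b hb; have := tri b hb b0 hb0; grind
  by_cases hA1 : ∀ a ∈ A, c v a = x
  · exact add2_core hs hg h5 hv (h.symm hs) hxi hA1 hB' b0 hb0 hbx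
  by_cases hB1 : ∀ a ∈ B, c v a = x
  · exact add2_core hs hg h5 hv h hxi hB1 hA' a0 ha0 hx
  exfalso
  push Not at hA1 hB1
  obtain ⟨a1, ha1, hna1⟩ := hA1
  obtain ⟨b1, hb1, hnb1⟩ := hB1
  have ea := (hA' a1 ha1).resolve_right hna1
  have eb := (hB' b1 hb1).resolve_right hnb1
  have ga := hg v a1 a0 (hvA _ ha1) (hvA _ ha0) (by grind)
  have gb := hg v b1 b0 (hvB _ hb1) (hvB _ hb0) (by grind)
  have := hvA _ ha0
  have := hvA _ ha1
  have := hvB _ hb0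
  have := hvB _ hb1
  have := hAB _ ha0 _ hb0
  have := hAB _ ha0 _ hb1
  have := hAB _ ha1 _ hb0
  have := hAB _ ha1 _ hb1
  have := hcol _ ha0 _ hb0
  have := hcol _ ha0 _ hb1
  have := hcol _ ha1 _ hb0
  have := hcol _ ha1 _ hb1
  refine no5 hs h5 i x v a0 a1 b0 b1 ?_ ?_
  · simp; grind
  · simp; grind

theorem add4_core (hs : ∀ a b, c a b = c b a) (hg : Gal c)
    {U A B C D : Finset V} {i j : β} {v : V} (hv : v ∉ U) (h : Sp4 c U A B C D i j)
    (a0 : V) (ha0 : a0 ∈ A) (h1 : c v a0 ≠ i) (h2 : c v a0 ≠ j) : Dec c (insert v U) := by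
  obtain ⟨ij, un, dAB, dAC, dAD, dBC, dBD, dCD, nA, ⟨b0, hb0⟩, ⟨c0, hc0⟩, ⟨d0, hd0⟩,
    AB, BC, CD, AC, AD, BD⟩ := h
  simp only [Finset.disjoint_left] at dAB dAC dAD dBC dBD dCD
  obtain ⟨x, hx⟩ : ∃ x, c v a0 = x := ⟨_, rfl⟩
  have hvU : ∀ a ∈ U, v ≠ a := by rintro a ha rfl; exact hv ha
  have tri : ∀ a ∈ U, ∀ b ∈ U, a ≠ b → c v a = c v b ∨ c v a = c a b ∨ c v b = c a b := by
    intro a ha b hb hab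
    exact hg v a b (hvU a ha) (hvU b hb) hab
  have hA : ∀ a ∈ A, a ∈ U := fun a ha => by rw [un]; tauto
  have hB : ∀ a ∈ B, a ∈ U := fun a ha => by rw [un]; tauto
  have hC : ∀ a ∈ C, a ∈ U := fun a ha => by rw [un]; tauto
  have hD : ∀ a ∈ D, a ∈ U := fun a ha => by rw [un]; tauto
  have tAB : ∀ a ∈ A, ∀ b ∈ B, c v a = c v b ∨ c v a = i ∨ c v b = i := by
    intro a ha b hb
    have := tri a (hA a ha) b (hB b hb) (by rintro rfl; exact dAB ha hb)
    rwa [AB a ha b hb] at this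
  have tBC : ∀ a ∈ B, ∀ b ∈ C, c v a = c v b ∨ c v a = i ∨ c v b = i := by
    intro a ha b hb
    have := tri a (hB a ha) b (hC b hb) (by rintro rfl; exact dBC ha hb)
    rwa [BC a ha b hb] at this
  have tCD : ∀ a ∈ C, ∀ b ∈ D, c v a = c v b ∨ c v a = i ∨ c v b = i := by
    intro a ha b hb
    have := tri a (hC a ha) b (hD b hb) (by rintro rfl; exact dCD ha hb)
    rwa [CD a ha b hb] at this
  have tAC : ∀ a ∈ A, ∀ b ∈ C, c v a = c v b ∨ c v a = j ∨ c v b = j := by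
    intro a ha b hb
    have := tri a (hA a ha) b (hC b hb) (by rintro rfl; exact dAC ha hb)
    rwa [AC a ha b hb] at this
  have tAD : ∀ a ∈ A, ∀ b ∈ D, c v a = c v b ∨ c v a = j ∨ c v b = j := by
    intro a ha b hb
    have := tri a (hA a ha) b (hD b hb) (by rintro rfl; exact dAD ha hb)
    rwa [AD a ha b hb] at this
  have tBD : ∀ a ∈ B, ∀ b ∈ D, c v a = c v b ∨ c v a = j ∨ c v b = j := by
    intro a ha b hb
    have := tri a (hB a ha) b (hD b hb) (by rintro rfl; exact dBD ha hb)
    rwa [BD a ha b hb] at this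
  have eB : ∀ b ∈ B, c v b = i ∨ c v b = x := fun b hb => by have := tAB a0 ha0 b hb; grind
  have eC : ∀ b ∈ C, c v b = j ∨ c v b = x := fun b hb => by have := tAC a0 ha0 b hb; grind
  have eD : ∀ b ∈ D, c v b = j ∨ c v b = x := fun b hb => by have := tAD a0 ha0 b hb; grind
  by_cases hall : (∀ b ∈ B, c v b = i) ∧ (∀ b ∈ C, c v b = j) ∧ (∀ b ∈ D, c v b = j)
  · obtain ⟨q1, q2, q3⟩ := hall
    right
    refine ⟨insert v A, B, C, D, i, j, ?_⟩
    have vB : v ∉ B := fun h => hv (hB v h)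
    have vC : v ∉ C := fun h => hv (hC v h)
    have vD : v ∉ D := fun h => hv (hD v h)
    constructor
    · exact ij
    · intro y; simp only [Finset.mem_insert, un]; tauto
    · simp only [Finset.disjoint_left, Finset.mem_insert]; grind
    · simp only [Finset.disjoint_left, Finset.mem_insert]; grind
    · simp only [Finset.disjoint_left, Finset.mem_insert]; grind
    · simpa only [Finset.disjoint_left] using dBC
    · simpa only [Finset.disjoint_left] using dBD
    · simpa only [Finset.disjoint_left] using dCD
    · simp
    · exact ⟨b0, hb0⟩
    · exact ⟨c0, hc0⟩
    · exact ⟨d0, hd0⟩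
    · simp only [Finset.mem_insert]; grind
    · exact BC
    · exact CD
    · simp only [Finset.mem_insert]; grind
    · simp only [Finset.mem_insert]; grind
    · exact BD
  · have hxi : x ≠ i := by rw [← hx]; exact h1
    have hxj : x ≠ j := by rw [← hx]; exact h2
    clear tri AB BC CD AC AD BD dAB dAC dAD dBC dBD dCD hvU
    have sB : (∃ b ∈ B, c v b = x) → ∀ y ∈ C, c v y = x := by
      rintro ⟨b, hb, e⟩ y hy
      have := tBC b hb y hy
      have := eC y hy
      grind
    have sC : (∃ b ∈ C, c v b = x) → ∀ y ∈ D, c v y = x := by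
      rintro ⟨b, hb, e⟩ y hy
      have := tCD b hb y hy
      have := eD y hy
      grind
    have sD : (∃ b ∈ D, c v b = x) → ∀ y ∈ B, c v y = x := by
      rintro ⟨b, hb, e⟩ y hy
      have := tBD y hy b hb
      have := eB y hy
      grind
    have key : (∀ y ∈ B, c v y = x) ∧ (∀ y ∈ C, c v y = x) ∧ (∀ y ∈ D, c v y = x) := by
      by_cases r1 : ∃ b ∈ B, c v b = x
      · have s1 := sB r1
        have s2 := sC ⟨c0, hc0, s1 c0 hc0⟩
        exact ⟨sD ⟨d0, hd0, s2 d0 hd0⟩, s1, s2⟩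
      by_cases r2 : ∃ b ∈ C, c v b = x
      · have s2 := sC r2
        have s3 := sD ⟨d0, hd0, s2 d0 hd0⟩
        exact ⟨s3, sB ⟨b0, hb0, s3 b0 hb0⟩, s2⟩
      by_cases r3 : ∃ b ∈ D, c v b = x
      · have s3 := sD r3
        have s1 := sB ⟨b0, hb0, s3 b0 hb0⟩
        exact ⟨s3, s1, sC ⟨c0, hc0, s1 c0 hc0⟩⟩
      exfalso
      push Not at r1 r2 r3
      exact hall ⟨fun b hb => (eB b hb).resolve_right (r1 b hb),
        fun b hb => (eC b hb).resolve_right (r2 b hb),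
        fun b hb => (eD b hb).resolve_right (r3 b hb)⟩
    obtain ⟨q1, q2, q3⟩ := key
    have q0 : ∀ a ∈ A, c v a = x := by
      intro a ha
      have := tAB a ha b0 hb0
      have := tAC a ha c0 hc0
      have := q1 b0 hb0
      have := q2 c0 hc0
      grind
    left
    refine ⟨{v}, U, x, ?_, by simpa using hv, by simp, ⟨b0, hB b0 hb0⟩, ?_⟩
    · ext y; simp
    · intro a ha y hy
      rw [Finset.mem_singleton] at ha
      subst ha
      rcases (un y).1 hy with h | h | h | h
      · exact q0 y h
      · exact q1 y h
      · exact q2 y h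
      · exact q3 y h

theorem add4 (hs : ∀ a b, c a b = c b a) (hg : Gal c)
    (h5 : ∀ i j, ∀ S : Finset V, Cl c (fun t => t = i ∨ t = j) S → S.card ≤ 4)
    {U A B C D : Finset V} {i j : β} {v : V} (hv : v ∉ U) (h : Sp4 c U A B C D i j) :
    Dec c (insert v U) := by
  obtain ⟨a, ha⟩ := h.nA
  obtain ⟨b, hb⟩ := h.nB
  obtain ⟨d, hd⟩ := h.nC
  obtain ⟨e, he⟩ := h.nD
  by_cases xa : c v a = i ∨ c v a = j
  swap
  · push Not at xa
    exact add4_core hs hg hv h a ha xa.1 xa.2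
  by_cases xb : c v b = i ∨ c v b = j
  swap
  · push Not at xb
    exact add4_core hs hg hv (h.swap hs) b hb xb.2 xb.1
  by_cases xd : c v d = i ∨ c v d = j
  swap
  · push Not at xd
    exact add4_core hs hg hv ((h.swap hs).flip hs) d hd xd.2 xd.1
  by_cases xe : c v e = i ∨ c v e = j
  swap
  · push Not at xe
    exact add4_core hs hg hv (h.flip hs) e he xe.1 xe.2
  exfalso
  have hvU : ∀ a ∈ U, v ≠ a := by rintro a ha rfl; exact hv ha
  have := hvU a ((h.un a).2 (by tauto))
  have := hvU b ((h.un b).2 (by tauto))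
  have := hvU d ((h.un d).2 (by tauto))
  have := hvU e ((h.un e).2 (by tauto))
  have := Finset.disjoint_iff_ne.1 h.dAB a ha b hb
  have := Finset.disjoint_iff_ne.1 h.dAC a ha d hd
  have := Finset.disjoint_iff_ne.1 h.dAD a ha e he
  have := Finset.disjoint_iff_ne.1 h.dBC b hb d hd
  have := Finset.disjoint_iff_ne.1 h.dBD b hb e he
  have := Finset.disjoint_iff_ne.1 h.dCD d hd e he
  have := h.AB a ha b hb
  have := h.AC a ha d hd
  have := h.AD a ha e he
  have := h.BC b hb d hd
  have := h.BD b hb e he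
  have := h.CD d hd e he
  refine no5 hs h5 i j v a b d e ?_ ?_
  · simp; grind
  · simp; grind

theorem decomp (hs : ∀ a b, c a b = c b a) (hg : Gal c)
    (h5 : ∀ i j, ∀ S : Finset V, Cl c (fun t => t = i ∨ t = j) S → S.card ≤ 4)
    (W : Finset V) : 2 ≤ W.card → Dec c W := by
  induction W using Finset.induction_on with
  | empty => simp
  | insert v U hv ih =>
    intro h
    rw [Finset.card_insert_of_notMem hv] at h
    by_cases hU : 2 ≤ U.card
    · rcases ih hU with ⟨A, B, i, h⟩ | ⟨A, B, C, D, i, j, h⟩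
      · exact add2 hs hg h5 hv h
      · exact add4 hs hg h5 hv h
    · have : U.card = 1 := by omega
      obtain ⟨u, rfl⟩ := Finset.card_eq_one.1 this
      left
      refine ⟨{v}, {u}, c v u, ?_, by simpa using hv, by simp, by simp, ?_⟩
      · ext y; simp
      · simp


theorem om_le_four
    (h5 : ∀ i j, ∀ S : Finset V, Cl c (fun t => t = i ∨ t = j) S → S.card ≤ 4)
    (P : β → Prop) (W : Finset V) (i j : β)
    (h : ∀ x ∈ W, ∀ y ∈ W, x ≠ y → P (c x y) → c x y = i ∨ c x y = j) : om c P W ≤ 4 := by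
  obtain ⟨X, hX, hc, he⟩ := exists_om c P W
  rw [← he]
  exact h5 i j X (fun x hx y hy hxy => h x (hX hx) y (hX hy) hxy (hc x hx y hy hxy))

theorem om_pos (P : β → Prop) {W : Finset V} (h : W.Nonempty) : 1 ≤ om c P W := by
  obtain ⟨x, hx⟩ := h
  have := le_om (c := c) (P := P) (W := W) (X := {x}) (by simpa using hx)
    (by intro a ha b hb hab; simp at ha hb; exact absurd (ha.trans hb.symm) hab)
  simpa using this

theorem Sp2.ss {W A B : Finset V} {i : β} (h : Sp2 c W A B i) :
    A ⊂ W ∧ B ⊂ W ∧ W.card = A.card + B.card := by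
  have hd := Finset.disjoint_left.1 h.dj
  obtain ⟨a, ha⟩ := h.nA
  obtain ⟨b, hb⟩ := h.nB
  have e := h.un
  refine ⟨?_, ?_, ?_⟩
  · rw [Finset.ssubset_iff_of_subset (by rw [e]; exact Finset.subset_union_left)]
    exact ⟨b, by rw [e]; simp [hb], fun h => hd h hb⟩
  · rw [Finset.ssubset_iff_of_subset (by rw [e]; exact Finset.subset_union_right)]
    exact ⟨a, by rw [e]; simp [ha], fun h => hd ha h⟩
  · rw [e, Finset.card_union_of_disjoint h.dj]

theorem Sp4.ssA {W A B C D : Finset V} {i j : β} (h : Sp4 c W A B C D i j) : A ⊂ W := by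
  rw [Finset.ssubset_iff_of_subset (fun x hx => (h.un x).2 (Or.inl hx))]
  obtain ⟨b, hb⟩ := h.nB
  exact ⟨b, (h.un b).2 (by tauto), fun h' => Finset.disjoint_left.1 h.dAB h' hb⟩

theorem Sp4.ss (hs : ∀ a b, c a b = c b a) {W A B C D : Finset V} {i j : β}
    (h : Sp4 c W A B C D i j) : A ⊂ W ∧ B ⊂ W ∧ C ⊂ W ∧ D ⊂ W :=
  ⟨h.ssA, (h.swap hs).ssA, ((h.swap hs).flip hs).ssA, (h.flip hs).ssA⟩

theorem Sp4.djs {W A B C D : Finset V} {i j : β} (h : Sp4 c W A B C D i j) :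
    Disjoint (A ∪ B) (C ∪ D) := by
  rw [Finset.disjoint_union_left, Finset.disjoint_union_right, Finset.disjoint_union_right]
  exact ⟨⟨h.dAC, h.dAD⟩, h.dBC, h.dBD⟩

theorem Sp4.card {W A B C D : Finset V} {i j : β} (h : Sp4 c W A B C D i j) :
    W.card = A.card + B.card + (C.card + D.card) := by
  have e : W = (A ∪ B) ∪ (C ∪ D) := by
    ext x; rw [h.un]; simp only [Finset.mem_union]; tauto
  rw [e, Finset.card_union_of_disjoint h.djs, Finset.card_union_of_disjoint h.dAB,
    Finset.card_union_of_disjoint h.dCD]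

theorem Sp4.om_sum (hs : ∀ a b, c a b = c b a) {W A B C D : Finset V} {i j : β}
    (h : Sp4 c W A B C D i j) (P : β → Prop) (hi : P i) (hj : P j) :
    om c P A + om c P B + (om c P C + om c P D) ≤ om c P W := by
  obtain ⟨sA, sB, sC, sD⟩ := h.ss hs
  have h1 := om_union (P := P) hs (W := A ∪ B) Finset.subset_union_left
    Finset.subset_union_right h.dAB (fun a ha b hb => by rw [h.AB a ha b hb]; exact hi)
  have h2 := om_union (P := P) hs (W := C ∪ D) Finset.subset_union_left
    Finset.subset_union_right h.dCD (fun a ha b hb => by rw [h.CD a ha b hb]; exact hi)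
  have h3 := om_union (P := P) hs (W := W) (Finset.union_subset sA.1 sB.1)
    (Finset.union_subset sC.1 sD.1) h.djs (by
      intro a ha b hb
      rw [Finset.mem_union] at ha hb
      rcases ha with ha | ha <;> rcases hb with hb | hb
      · rw [h.AC a ha b hb]; exact hj
      · rw [h.AD a ha b hb]; exact hj
      · rw [h.BC a ha b hb]; exact hi
      · rw [h.BD a ha b hb]; exact hj)
  omega

theorem arith4 (a b c d a' b' c' d' M N : ℤ) (ha' : 0 ≤ a')
    (hd' : 0 ≤ d') (hb : 0 ≤ b) (hc : 0 ≤ c) (hM : 0 ≤ M) (ha : 0 ≤ a) (hd : 0 ≤ d)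
    (h1 : a + b ≤ M) (h2 : b + c ≤ M) (h3 : c + d ≤ M)
    (k1 : a' + c' ≤ N) (k2 : a' + d' ≤ N) (k3 : b' + d' ≤ N) :
    a * a' + b * b' + (c * c' + d * d') ≤ M * N := by
  have e1 : a * a' ≤ (M - b) * a' := mul_le_mul_of_nonneg_right (by linarith) ha'
  have e2 : d * d' ≤ (M - c) * d' := mul_le_mul_of_nonneg_right (by linarith) hd'
  have hbM : b ≤ M := by linarith
  have hcM : c ≤ M := by linarith
  have m1 := mul_le_mul_of_nonneg_left k1 hM
  have m2 := mul_le_mul_of_nonneg_left k2 hM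
  have m3 := mul_le_mul_of_nonneg_left k3 hM
  rcases le_total b' a' with hb' | hb' <;> rcases le_total c' d' with hc' | hc'
  · nlinarith [mul_nonneg hb (sub_nonneg.2 hb'), mul_nonneg hc (sub_nonneg.2 hc')]
  · nlinarith [mul_nonneg hb (sub_nonneg.2 hb'),
      mul_nonneg (sub_nonneg.2 hcM) (sub_nonneg.2 hc')]
  · nlinarith [mul_nonneg hc (sub_nonneg.2 hc'),
      mul_nonneg (sub_nonneg.2 hbM) (sub_nonneg.2 hb')]
  · rcases le_total (b' - a') (c' - d') with hh | hh
    · nlinarith [mul_nonneg hb (sub_nonneg.2 hh),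
        mul_nonneg (sub_nonneg.2 h2) (sub_nonneg.2 hc')]
    · nlinarith [mul_nonneg hc (sub_nonneg.2 hh),
        mul_nonneg (sub_nonneg.2 h2) (sub_nonneg.2 hb')]

theorem Sp4.mixed (hs : ∀ a b, c a b = c b a) {W A B C D : Finset V} {i j : β}
    (h : Sp4 c W A B C D i j) (P Q : β → Prop) (hi : P i) (hj : Q j)
    (ih : ∀ X, X ⊂ W → X.card ≤ om c P X * om c Q X) :
    W.card ≤ om c P W * om c Q W := by
  obtain ⟨sA, sB, sC, sD⟩ := h.ss hs
  have h1 := om_union (P := P) hs sA.1 sB.1 h.dAB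
    (fun a ha b hb => by rw [h.AB a ha b hb]; exact hi)
  have h2 := om_union (P := P) hs sB.1 sC.1 h.dBC
    (fun a ha b hb => by rw [h.BC a ha b hb]; exact hi)
  have h3 := om_union (P := P) hs sC.1 sD.1 h.dCD
    (fun a ha b hb => by rw [h.CD a ha b hb]; exact hi)
  have k1 := om_union (P := Q) hs sA.1 sC.1 h.dAC
    (fun a ha b hb => by rw [h.AC a ha b hb]; exact hj)
  have k2 := om_union (P := Q) hs sA.1 sD.1 h.dAD
    (fun a ha b hb => by rw [h.AD a ha b hb]; exact hj)
  have k3 := om_union (P := Q) hs sB.1 sD.1 h.dBD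
    (fun a ha b hb => by rw [h.BD a ha b hb]; exact hj)
  have iA := ih A sA
  have iB := ih B sB
  have iC := ih C sC
  have iD := ih D sD
  have e := h.card
  have := arith4 (om c P A) (om c P B) (om c P C) (om c P D) (om c Q A) (om c Q B) (om c Q C)
    (om c Q D) (om c P W) (om c Q W) (by positivity) (by positivity) (by positivity)
    (by positivity) (by positivity) (by positivity) (by positivity)
    (by exact_mod_cast h1) (by exact_mod_cast h2) (by exact_mod_cast h3)
    (by exact_mod_cast k1) (by exact_mod_cast k2) (by exact_mod_cast k3)
  norm_cast at this
  omega

theorem Sp4.pure (hs : ∀ a b, c a b = c b a) {W A B C D : Finset V} {i j : β}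
    (h : Sp4 c W A B C D i j) (P Q : β → Prop) (hi : P i) (hj : P j)
    (ih : ∀ X, X ⊂ W → X.card ≤ om c P X * om c Q X) :
    W.card ≤ om c P W * om c Q W := by
  obtain ⟨sA, sB, sC, sD⟩ := h.ss hs
  have iA := (ih A sA).trans (Nat.mul_le_mul_left _ (om_mono (P := Q) sA.1))
  have iB := (ih B sB).trans (Nat.mul_le_mul_left _ (om_mono (P := Q) sB.1))
  have iC := (ih C sC).trans (Nat.mul_le_mul_left _ (om_mono (P := Q) sC.1))
  have iD := (ih D sD).trans (Nat.mul_le_mul_left _ (om_mono (P := Q) sD.1))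
  have e := h.card
  have := Nat.mul_le_mul_right (om c Q W) (h.om_sum hs P hi hj)
  nlinarith

theorem Sp2.pure (hs : ∀ a b, c a b = c b a) {W A B : Finset V} {i : β}
    (h : Sp2 c W A B i) (P Q : β → Prop) (hi : P i)
    (ih : ∀ X, X ⊂ W → X.card ≤ om c P X * om c Q X) :
    W.card ≤ om c P W * om c Q W := by
  obtain ⟨sA, sB, e⟩ := h.ss
  have iA := (ih A sA).trans (Nat.mul_le_mul_left _ (om_mono (P := Q) sA.1))
  have iB := (ih B sB).trans (Nat.mul_le_mul_left _ (om_mono (P := Q) sB.1))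
  have h1 := om_union (P := P) hs sA.1 sB.1 h.dj
    (fun a ha b hb => by rw [h.col a ha b hb]; exact hi)
  have := Nat.mul_le_mul_right (om c Q W) h1
  nlinarith

theorem card_le_mul (hs : ∀ a b, c a b = c b a) (hg : Gal c)
    (h5 : ∀ i j, ∀ S : Finset V, Cl c (fun t => t = i ∨ t = j) S → S.card ≤ 4)
    (P Q : β → Prop) (hPQ : ∀ t, P t ∨ Q t) (W : Finset V) :
    W.card ≤ om c P W * om c Q W := by
  induction W using Finset.strongInduction with
  | H W ih =>
    have ih' : ∀ X, X ⊂ W → X.card ≤ om c Q X * om c P X := fun X hX => by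
      rw [mul_comm]; exact ih X hX
    by_cases h2 : 2 ≤ W.card
    · rcases decomp hs hg h5 W h2 with ⟨A, B, i, h⟩ | ⟨A, B, C, D, i, j, h⟩
      · rcases hPQ i with hi | hi
        · exact h.pure hs P Q hi ih
        · rw [mul_comm]
          exact h.pure hs Q P hi ih'
      · rcases hPQ i with hi | hi <;> rcases hPQ j with hj | hj
        · exact h.pure hs P Q hi hj ih
        · exact h.mixed hs P Q hi hj ih
        · rw [mul_comm]
          exact h.mixed hs Q P hi hj ih'
        · rw [mul_comm]
          exact h.pure hs Q P hi hj ih'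
    · by_cases h0 : W.card = 0
      · omega
      · have hne : W.Nonempty := Finset.card_pos.1 (by omega)
        have := Nat.mul_le_mul (om_pos (c := c) P hne) (om_pos (c := c) Q hne)
        omega

theorem arith2 (a b x1 x2 y1 y2 z X Y : ℕ) (h1 : a ^ 2 ≤ x1 * y1 * z) (h2 : b ^ 2 ≤ x2 * y2 * z)
    (hX : x1 + x2 ≤ X) (hY : y1 + y2 ≤ Y) : (a + b) ^ 2 ≤ X * Y * z := by
  have h3 : (x1 + x2) * (y1 + y2) * z ≤ X * Y * z :=
    Nat.mul_le_mul_right _ (Nat.mul_le_mul hX hY)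
  have h4 : (a * b) ^ 2 ≤ (x1 * y2 * z) * (x2 * y1 * z) := by
    calc (a * b) ^ 2 = a ^ 2 * b ^ 2 := by ring
      _ ≤ (x1 * y1 * z) * (x2 * y2 * z) := Nat.mul_le_mul h1 h2
      _ = _ := by ring
  have h5 : 2 * (a * b) ≤ x1 * y2 * z + x2 * y1 * z := by
    generalize x1 * y2 * z = u at *
    generalize x2 * y1 * z = w at *
    have : (2 * (a * b)) ^ 2 ≤ (u + w) ^ 2 := by
      zify at h4 ⊢
      nlinarith [sq_nonneg ((u : ℤ) - w)]
    exact (Nat.pow_le_pow_iff_left (by norm_num)).1 this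
  nlinarith

theorem Sp2.tri (hs : ∀ a b, c a b = c b a) {W A B : Finset V} {i : β}
    (h : Sp2 c W A B i) (P Q R : β → Prop) (hi : P i) (hi' : Q i)
    (ih : ∀ X, X ⊂ W → X.card ^ 2 ≤ om c P X * om c Q X * om c R X) :
    W.card ^ 2 ≤ om c P W * om c Q W * om c R W := by
  obtain ⟨sA, sB, e⟩ := h.ss
  have iA := (ih A sA).trans (Nat.mul_le_mul_left _ (om_mono (P := R) sA.1))
  have iB := (ih B sB).trans (Nat.mul_le_mul_left _ (om_mono (P := R) sB.1))
  have h1 := om_union (P := P) hs sA.1 sB.1 h.dj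
    (fun a ha b hb => by rw [h.col a ha b hb]; exact hi)
  have h2 := om_union (P := Q) hs sA.1 sB.1 h.dj
    (fun a ha b hb => by rw [h.col a ha b hb]; exact hi')
  rw [e]
  exact arith2 _ _ _ _ _ _ _ _ _ iA iB h1 h2

theorem Sp4.insideA (hs : ∀ a b, c a b = c b a)
    (h5 : ∀ i j, ∀ S : Finset V, Cl c (fun t => t = i ∨ t = j) S → S.card ≤ 4)
    {W A B C D : Finset V} {i j : β}
    (h : Sp4 c W A B C D i j) : Cl c (fun t => t ≠ i ∧ t ≠ j) A := by
  intro x hx a ha hxa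
  by_contra hcon
  obtain ⟨b, hb⟩ := h.nB
  obtain ⟨d, hd⟩ := h.nC
  obtain ⟨e, he⟩ := h.nD
  have := Finset.disjoint_iff_ne.1 h.dAB a ha b hb
  have := Finset.disjoint_iff_ne.1 h.dAC a ha d hd
  have := Finset.disjoint_iff_ne.1 h.dAD a ha e he
  have := Finset.disjoint_iff_ne.1 h.dAB x hx b hb
  have := Finset.disjoint_iff_ne.1 h.dAC x hx d hd
  have := Finset.disjoint_iff_ne.1 h.dAD x hx e he
  have := Finset.disjoint_iff_ne.1 h.dBC b hb d hd
  have := Finset.disjoint_iff_ne.1 h.dBD b hb e he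
  have := Finset.disjoint_iff_ne.1 h.dCD d hd e he
  have := h.AB a ha b hb
  have := h.AC a ha d hd
  have := h.AD a ha e he
  have := h.AB x hx b hb
  have := h.AC x hx d hd
  have := h.AD x hx e he
  have := h.BC b hb d hd
  have := h.BD b hb e he
  have := h.CD d hd e he
  refine no5 hs h5 i j x a b d e ?_ ?_
  · simp; grind
  · simp; grind

theorem Sp4.tri (hs : ∀ a b, c a b = c b a)
    (h5 : ∀ i j, ∀ S : Finset V, Cl c (fun t => t = i ∨ t = j) S → S.card ≤ 4)
    {W A B C D : Finset V} {i j : β}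
    (h : Sp4 c W A B C D i j) (R : β → Prop) (hi : R i) (hj : R j) :
    W.card ^ 2 ≤ om c (fun t => t ≠ i) W * om c (fun t => t ≠ j) W * om c R W := by
  obtain ⟨sA, sB, sC, sD⟩ := h.ss hs
  have hA := h.insideA hs h5
  have hB := (h.swap hs).insideA hs h5
  have hC := ((h.swap hs).flip hs).insideA hs h5
  have hD := (h.flip hs).insideA hs h5
  have pA : A.card ≤ om c (fun t => t ≠ i) A :=
    le_om subset_rfl (fun x hx y hy hxy => (hA x hx y hy hxy).1)
  have pB : B.card ≤ om c (fun t => t ≠ i) B :=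
    le_om subset_rfl (fun x hx y hy hxy => (hB x hx y hy hxy).2)
  have pC : C.card ≤ om c (fun t => t ≠ i) C :=
    le_om subset_rfl (fun x hx y hy hxy => (hC x hx y hy hxy).2)
  have pD : D.card ≤ om c (fun t => t ≠ i) D :=
    le_om subset_rfl (fun x hx y hy hxy => (hD x hx y hy hxy).1)
  have qA : A.card ≤ om c (fun t => t ≠ j) A :=
    le_om subset_rfl (fun x hx y hy hxy => (hA x hx y hy hxy).2)
  have qB : B.card ≤ om c (fun t => t ≠ j) B :=
    le_om subset_rfl (fun x hx y hy hxy => (hB x hx y hy hxy).1)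
  have qC : C.card ≤ om c (fun t => t ≠ j) C :=
    le_om subset_rfl (fun x hx y hy hxy => (hC x hx y hy hxy).1)
  have qD : D.card ≤ om c (fun t => t ≠ j) D :=
    le_om subset_rfl (fun x hx y hy hxy => (hD x hx y hy hxy).2)
  have u1 := om_union (P := fun t => t ≠ i) hs sA.1 sC.1 h.dAC
    (fun a ha b hb => by rw [h.AC a ha b hb]; exact h.ij.symm)
  have u2 := om_union (P := fun t => t ≠ i) hs sB.1 sD.1 h.dBD
    (fun a ha b hb => by rw [h.BD a ha b hb]; exact h.ij.symm)
  have w1 := om_union (P := fun t => t ≠ j) hs sA.1 sB.1 h.dAB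
    (fun a ha b hb => by rw [h.AB a ha b hb]; exact h.ij)
  have w2 := om_union (P := fun t => t ≠ j) hs sC.1 sD.1 h.dCD
    (fun a ha b hb => by rw [h.CD a ha b hb]; exact h.ij)
  have r := h.om_sum hs R hi hj
  have r1 := om_pos (c := c) R h.nA
  have r2 := om_pos (c := c) R h.nB
  have r3 := om_pos (c := c) R h.nC
  have r4 := om_pos (c := c) R h.nD
  have e := h.card
  have t1 : W.card ≤ 2 * om c (fun t => t ≠ i) W := by omega
  have t2 : W.card ≤ 2 * om c (fun t => t ≠ j) W := by omega
  have t3 : 4 ≤ om c R W := by omega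
  calc W.card ^ 2 = W.card * W.card := sq _
    _ ≤ (2 * om c (fun t => t ≠ i) W) * (2 * om c (fun t => t ≠ j) W) := Nat.mul_le_mul t1 t2
    _ = om c (fun t => t ≠ i) W * om c (fun t => t ≠ j) W * 4 := by ring
    _ ≤ _ := Nat.mul_le_mul_left _ t3

theorem tri_bound (hs : ∀ a b, c a b = c b a) (hg : Gal c)
    (h5 : ∀ i j, ∀ S : Finset V, Cl c (fun t => t = i ∨ t = j) S → S.card ≤ 4)
    (p q r : β) (hpq : p ≠ q) (hpr : p ≠ r) (hqr : q ≠ r) (W : Finset V)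
    (hc : Cl c (fun t => t = p ∨ t = q ∨ t = r) W) :
    W.card ^ 2 ≤ om c (fun t => t ≠ p) W * om c (fun t => t ≠ q) W * om c (fun t => t ≠ r) W := by
  induction W using Finset.strongInduction with
  | H W ih0 =>
    have ih : ∀ X, X ⊂ W → X.card ^ 2 ≤
        om c (fun t => t ≠ p) X * om c (fun t => t ≠ q) X * om c (fun t => t ≠ r) X :=
      fun X hX => ih0 X hX (fun x hx y hy => hc x (hX.1 hx) y (hX.1 hy))
    by_cases h2 : 2 ≤ W.card
    · rcases decomp hs hg h5 W h2 with ⟨A, B, i, h⟩ | ⟨A, B, C, D, i, j, h⟩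
      · obtain ⟨a, ha⟩ := h.nA
        obtain ⟨b, hb⟩ := h.nB
        have hi := hc a (h.ss.1.1 ha) b (h.ss.2.1.1 hb) (Finset.disjoint_iff_ne.1 h.dj a ha b hb)
        simp only [h.col a ha b hb] at hi
        rcases hi with rfl | rfl | rfl
        · have := h.tri hs (fun t => t ≠ q) (fun t => t ≠ r) (fun t => t ≠ i) hpq hpr
            (fun X hX => (ih X hX).trans (le_of_eq (by ring)))
          exact this.trans (le_of_eq (by ring))
        · have := h.tri hs (fun t => t ≠ p) (fun t => t ≠ r) (fun t => t ≠ i) hpq.symm hqr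
            (fun X hX => (ih X hX).trans (le_of_eq (by ring)))
          exact this.trans (le_of_eq (by ring))
        · exact h.tri hs (fun t => t ≠ p) (fun t => t ≠ q) (fun t => t ≠ i) hpr.symm hqr.symm ih
      · obtain ⟨a, ha⟩ := h.nA
        obtain ⟨b, hb⟩ := h.nB
        obtain ⟨d, hd⟩ := h.nC
        have hi := hc a ((h.ss hs).1.1 ha) b ((h.ss hs).2.1.1 hb)
          (Finset.disjoint_iff_ne.1 h.dAB a ha b hb)
        have hj := hc a ((h.ss hs).1.1 ha) d ((h.ss hs).2.2.1.1 hd)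
          (Finset.disjoint_iff_ne.1 h.dAC a ha d hd)
        simp only [h.AB a ha b hb] at hi
        simp only [h.AC a ha d hd] at hj
        have hij := h.ij
        obtain ⟨s, hsi, hsj, hperm⟩ : ∃ s, s ≠ i ∧ s ≠ j ∧
            om c (fun t => t ≠ i) W * om c (fun t => t ≠ j) W * om c (fun t => t ≠ s) W =
            om c (fun t => t ≠ p) W * om c (fun t => t ≠ q) W * om c (fun t => t ≠ r) W := by
          rcases hi with rfl | rfl | rfl <;> rcases hj with rfl | rfl | rfl
          · exact absurd rfl hij
          · exact ⟨r, hpr.symm, hqr.symm, by ring⟩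
          · exact ⟨q, hpq.symm, hqr, by ring⟩
          · exact ⟨r, hqr.symm, hpr.symm, by ring⟩
          · exact absurd rfl hij
          · exact ⟨p, hpq, hpr, by ring⟩
          · exact ⟨q, hqr, hpq.symm, by ring⟩
          · exact ⟨p, hpr, hpq, by ring⟩
          · exact absurd rfl hij
        rw [← hperm]
        exact h.tri hs h5 (fun t => t ≠ s) hsi.symm hsj.symm
    · by_cases h0 : W.card = 0
      · rw [h0]; simp
      · have hne : W.Nonempty := Finset.card_pos.1 (by omega)
        have h1 : W.card = 1 := by omega
        have := Nat.mul_le_mul (Nat.mul_le_mul (om_pos (c := c) (fun t => t ≠ p) hne)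
          (om_pos (c := c) (fun t => t ≠ q) hne)) (om_pos (c := c) (fun t => t ≠ r) hne)
        rw [h1]; simpa using this

theorem upper [DecidableEq β] (hs : ∀ a b, c a b = c b a) (hg : Gal c)
    (h5 : ∀ i j, ∀ S : Finset V, Cl c (fun t => t = i ∨ t = j) S → S.card ≤ 4)
    (k : ℕ) : 2 ≤ k → ∀ (K : Finset β) (W : Finset V), K.card = k →
      Cl c (fun t => t ∈ K) W → W.card ≤ 2 ^ k := by
  induction k using Nat.strong_induction_on with
  | _ k ih =>
    intro hk K W hK hc
    by_cases k2 : k = 2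
    · subst k2
      obtain ⟨i, j, hij, rfl⟩ := Finset.card_eq_two.1 hK
      exact h5 i j W (fun x hx y hy hxy => by simpa using hc x hx y hy hxy)
    by_cases k3 : k = 3
    · subst k3
      obtain ⟨p, q, r, hpq, hpr, hqr, rfl⟩ := Finset.card_eq_three.1 hK
      have hc' : Cl c (fun t => t = p ∨ t = q ∨ t = r) W :=
        fun x hx y hy hxy => by simpa using hc x hx y hy hxy
      have h := tri_bound hs hg h5 p q r hpq hpr hqr W hc'
      have a1 := om_le_four h5 (fun t => t ≠ p) W q r (fun x hx y hy hxy hn => by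
        have := hc' x hx y hy hxy; tauto)
      have a2 := om_le_four h5 (fun t => t ≠ q) W p r (fun x hx y hy hxy hn => by
        have := hc' x hx y hy hxy; tauto)
      have a3 := om_le_four h5 (fun t => t ≠ r) W p q (fun x hx y hy hxy hn => by
        have := hc' x hx y hy hxy; tauto)
      have := h.trans (Nat.mul_le_mul (Nat.mul_le_mul a1 a2) a3)
      have : W.card ^ 2 ≤ 8 ^ 2 := this
      exact (Nat.pow_le_pow_iff_left (by norm_num)).1 this
    obtain ⟨i, hi, j, hj, hij⟩ := Finset.one_lt_card.1 (show 1 < K.card by omega)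
    have h := card_le_mul hs hg h5 (fun t => t = i ∨ t = j) (fun t => ¬ (t = i ∨ t = j))
      (fun t => em _) W
    have a1 := om_le_four h5 (fun t => t = i ∨ t = j) W i j (fun x hx y hy hxy hn => hn)
    obtain ⟨X, hX, hcX, he⟩ := exists_om c (fun t => ¬ (t = i ∨ t = j)) W
    have a2 := ih (k - 2) (by omega) (by omega) ((K.erase i).erase j) X (by
      rw [Finset.card_erase_of_mem (Finset.mem_erase.2 ⟨hij.symm, hj⟩),
        Finset.card_erase_of_mem hi]
      omega) (fun x hx y hy hxy => by
        have := hcX x hx y hy hxy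
        have := hc x (hX hx) y (hX hy) hxy
        simp only [Finset.mem_erase]
        tauto)
    rw [he] at a2
    have e : 2 ^ k = 4 * 2 ^ (k - 2) := by
      obtain ⟨m, rfl⟩ : ∃ m, k = m + 2 := ⟨k - 2, by omega⟩
      rw [Nat.add_sub_cancel]; ring
    rw [e]
    exact h.trans (Nat.mul_le_mul a1 a2)

end

theorem colorsOn_sub {V β : Type*} [DecidableEq V] [DecidableEq β]
    (c : V → V → β) (S : Finset V) (T : Finset β) :
    colorsOn c S ⊆ T ↔ Cl c (fun t => t ∈ T) S := by
  unfold colorsOn Cl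
  constructor
  · intro h x hx y hy hxy
    apply h
    rw [Finset.mem_image]
    exact ⟨(x, y), by simp [hx, hy, hxy], rfl⟩
  · intro h t ht
    rw [Finset.mem_image] at ht
    obtain ⟨⟨x, y⟩, hp, rfl⟩ := ht
    simp only [Finset.mem_filter, Finset.mem_product] at hp
    exact h x hp.1.1 y hp.1.2 hp.2

theorem upper_main (k : ℕ) (hk : 2 ≤ k) (c : Fin (2 ^ k + 1) → Fin (2 ^ k + 1) → Fin k)
    (h : IsGallai c) :
    ∃ S : Finset (Fin (2 ^ k + 1)), S.card = 5 ∧ (colorsOn c S).card ≤ 2 := by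
  by_contra hcon
  push Not at hcon
  have hg : Gal c := by
    intro a b d h1 h2 h3
    have := h.2 a b d h1 h2 h3
    tauto
  have h5 : ∀ i j, ∀ S : Finset (Fin (2 ^ k + 1)),
      Cl c (fun t => t = i ∨ t = j) S → S.card ≤ 4 := by
    intro i j S hS
    by_contra hlt
    obtain ⟨T, hT, hT5⟩ := Finset.exists_subset_card_eq (show 5 ≤ S.card by omega)
    have h1 := hcon T hT5
    have h2 : colorsOn c T ⊆ {i, j} := (colorsOn_sub c T {i, j}).2
      (fun x hx y hy hxy => by simpa using hS x (hT hx) y (hT hy) hxy)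
    have := (Finset.card_le_card h2).trans Finset.card_le_two
    omega
  have := upper h.1 hg h5 k hk Finset.univ Finset.univ (by simp) (by intro x _ y _ _; simp)
  simp at this

theorem lower_main (k : ℕ) (hk : 2 ≤ k) :
    ∃ c : Fin (2 ^ k) → Fin (2 ^ k) → Fin k, IsGallai c ∧
      ∀ S : Finset (Fin (2 ^ k)), S.card = 5 → 3 ≤ (colorsOn c S).card := by
  classical
  let e : Fin (2 ^ k) ≃ (Fin k → Fin 2) := finFunctionFinEquiv.symm
  have ex : ∀ x y : Fin (2 ^ k), ∃ i : Fin k, x ≠ y →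
      (e x i ≠ e y i ∧ ∀ j < i, e x j = e y j) := by
    intro x y
    by_cases hxy : x = y
    · exact ⟨⟨0, by omega⟩, fun h => absurd hxy h⟩
    have hne : (Finset.univ.filter fun i => e x i ≠ e y i).Nonempty := by
      by_contra hemp
      rw [Finset.not_nonempty_iff_eq_empty, Finset.filter_eq_empty_iff] at hemp
      apply hxy
      apply e.injective
      funext i
      have := hemp (Finset.mem_univ i)
      exact not_not.1 this
    refine ⟨Finset.min' _ hne, fun _ => ⟨?_, ?_⟩⟩
    · exact (Finset.mem_filter.1 (Finset.min'_mem _ hne)).2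
    · intro j hj
      by_contra hn
      exact absurd (Finset.min'_le _ j (by simp [hn])) (not_le.2 hj)
  choose c hc using ex
  have uniq : ∀ x y i, x ≠ y → e x i ≠ e y i → (∀ j < i, e x j = e y j) → c x y = i := by
    intro x y i hxy h1 h2
    obtain ⟨h3, h4⟩ := hc x y hxy
    rcases lt_trichotomy (c x y) i with h | h | h
    · exact absurd (h2 _ h) h3
    · exact h
    · exact absurd (h4 _ h) h1
  refine ⟨c, ⟨?_, ?_⟩, ?_⟩
  · intro a b
    by_cases hab : a = b
    · rw [hab]
    obtain ⟨h1, h2⟩ := hc b a (Ne.symm hab)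
    exact uniq a b _ hab h1.symm (fun j hj => (h2 j hj).symm)
  · rintro a b d hab had hbd ⟨h1, h2, h3⟩
    obtain ⟨p1, p2⟩ := hc a b hab
    obtain ⟨q1, q2⟩ := hc a d had
    obtain ⟨r1, r2⟩ := hc b d hbd
    rcases lt_trichotomy (c a b) (c a d) with h | h | h
    · refine h2 (uniq b d (c a b) hbd ?_ ?_).symm
      · rw [← q2 _ h]; exact p1.symm
      · intro j hj; rw [← p2 j hj, q2 j (hj.trans h)]
    · exact h1 h
    · refine h3 (uniq b d (c a d) hbd ?_ ?_).symm
      · rw [← p2 _ h]; exact q1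
      · intro j hj; rw [← q2 j hj, p2 j (hj.trans h)]
  · intro S hS
    by_contra hlt
    have hT := (colorsOn_sub c S (colorsOn c S)).1 subset_rfl
    generalize colorsOn c S = T at hlt hT
    have hle : S.card ≤ (Finset.univ : Finset (T → Fin 2)).card := by
      apply Finset.card_le_card_of_injOn (fun x (i : T) => e x i) (by simp)
      intro x hx y hy hxy
      by_contra hne
      exact (hc x y hne).1 (congrFun hxy ⟨c x y, hT x hx y hy hne⟩)
    simp only [Finset.card_univ, Fintype.card_fun, Fintype.card_fin, Fintype.card_coe] at hle
    have : 2 ^ T.card ≤ 2 ^ 2 := Nat.pow_le_pow_right (by norm_num) (by omega)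
    omega

theorem gallaiNum_two_five (k : ℕ) (hk : 2 ≤ k) :
    gallaiNum k 2 5 = 2 ^ k + 1 ∧
    (∀ c : Fin (2 ^ k + 1) → Fin (2 ^ k + 1) → Fin k, IsGallai c →
      ∃ S : Finset (Fin (2 ^ k + 1)), S.card = 5 ∧ (colorsOn c S).card ≤ 2) ∧
    (∃ c : Fin (2 ^ k) → Fin (2 ^ k) → Fin k, IsGallai c ∧
      ∀ S : Finset (Fin (2 ^ k)), S.card = 5 → 3 ≤ (colorsOn c S).card) := by
  refine ⟨?_, upper_main k hk, lower_main k hk⟩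
  apply le_antisymm
  · exact Nat.sInf_le ⟨by positivity, upper_main k hk⟩
  · refine le_csInf ⟨2 ^ k + 1, by positivity, upper_main k hk⟩ ?_
    rintro n ⟨_, hn⟩
    by_contra hlt
    have hle : n ≤ 2 ^ k := by omega
    obtain ⟨c, hc, hS⟩ := lower_main k hk
    have inj := Fin.castLE_injective hle
    obtain ⟨S, hS5, hS2⟩ := hn (fun x y => c (Fin.castLE hle x) (Fin.castLE hle y))
      ⟨fun a b => hc.1 _ _, fun a b d h1 h2 h3 =>
        hc.2 _ _ _ (inj.ne h1) (inj.ne h2) (inj.ne h3)⟩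
    have h3 := hS (S.image (Fin.castLE hle)) (by rw [Finset.card_image_of_injective _ inj, hS5])
    have hsub : colorsOn c (S.image (Fin.castLE hle)) ⊆
        colorsOn (fun x y => c (Fin.castLE hle x) (Fin.castLE hle y)) S := by
      rw [colorsOn_sub]
      intro x hx y hy hxy
      rw [Finset.mem_image] at hx hy
      obtain ⟨x, hx, rfl⟩ := hx
      obtain ⟨y, hy, rfl⟩ := hy
      exact (colorsOn_sub _ S _).1 subset_rfl x hx y hy (fun h => hxy (by rw [h]))
    have := Finset.card_le_card hsub
    omega
end

section
/- g^4_3(6) = 8; that is, every Gallai-4-coloring of K_8 contains a set of 6 vertices spanning edges in at most 3 colors, and there exists a Gallai-4-coloring of K_7 in which every set of 6 vertices spans edges in at least 4 colors. -/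
open Finset

/-! ### A small verified backtracking search -/

/-- At least two of three colors agree. -/
def okTri (x y k : ℕ) : Bool :=
  cond (Nat.beq x y) true (cond (Nat.beq x k) true (Nat.beq y k))

/-- No rainbow triangle through the new edge of color `k`. -/
noncomputable def cmpRow (k : ℕ) (xs : List ℕ) : List ℕ → Bool :=
  List.rec (motive := fun _ => List ℕ → Bool) (fun _ => true)
    (fun x _ ih ys => List.rec (motive := fun _ => Bool) true
      (fun y ys' _ => cond (okTri x y k) (ih ys') false) ys) xs

/-- Edge lists of the four color classes. -/
abbrev EL := List (ℕ × ℕ)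

/-- Enumerate all admissible extensions by the vertex `n`. -/
noncomputable def extV (n : ℕ) (cont : List ℕ → EL → EL → EL → EL → Bool)
    (rows : List (ℕ × List ℕ)) : List ℕ → EL → EL → EL → EL → Bool :=
  List.rec (motive := fun _ => List ℕ → EL → EL → EL → EL → Bool) cont
    (fun r _ ih t e0 e1 e2 e3 =>
      cond (cond (cmpRow 0 r.2 t) (ih (0 :: t) ((r.1, n) :: e0) e1 e2 e3) true)
      (cond (cond (cmpRow 1 r.2 t) (ih (1 :: t) e0 ((r.1, n) :: e1) e2 e3) true)
      (cond (cond (cmpRow 2 r.2 t) (ih (2 :: t) e0 e1 ((r.1, n) :: e2) e3) true)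
      (cond (cmpRow 3 r.2 t) (ih (3 :: t) e0 e1 e2 ((r.1, n) :: e3)) true)
      false) false) false) rows

/-- Remove the edges at `u`. -/
noncomputable def delV (u : ℕ) (es : EL) : EL :=
  List.rec (motive := fun _ => EL) []
    (fun e _ ih => cond (Nat.beq e.1 u) ih (cond (Nat.beq e.2 u) ih (e :: ih))) es

/-- Covered by no vertex. -/
noncomputable def cov0 (es : EL) : Bool :=
  List.rec (motive := fun _ => Bool) true (fun _ _ _ => false) es

/-- Covered by one vertex. -/
noncomputable def cov1 (es : EL) : Bool :=
  List.rec (motive := fun _ => Bool) true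
    (fun e es _ => cond (cov0 (delV e.1 es)) true (cov0 (delV e.2 es))) es

/-- Covered by two vertices. -/
noncomputable def cov2 (es : EL) : Bool :=
  List.rec (motive := fun _ => Bool) true
    (fun e es _ => cond (cov1 (delV e.1 es)) true (cov1 (delV e.2 es))) es

/-- Some color class passes the test. -/
def prune (f : EL → Bool) (e0 e1 e2 e3 : EL) : Bool :=
  cond (f e3) true (cond (f e2) true (cond (f e1) true (f e0)))

noncomputable def search7 (rows : List (ℕ × List ℕ)) (e0 e1 e2 e3 : EL) : Bool :=
  cond (prune cov1 e0 e1 e2 e3) true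
    (extV 7 (fun _ => prune cov2) rows [] e0 e1 e2 e3)

noncomputable def search6 (rows : List (ℕ × List ℕ)) (e0 e1 e2 e3 : EL) : Bool :=
  cond (prune cov0 e0 e1 e2 e3) true
    (extV 6 (fun r => search7 (rows ++ [(6, r)])) rows [] e0 e1 e2 e3)

noncomputable def search5 (rows : List (ℕ × List ℕ)) (e0 e1 e2 e3 : EL) : Bool :=
  extV 5 (fun r => search6 (rows ++ [(5, r)])) rows [] e0 e1 e2 e3

noncomputable def search4 (rows : List (ℕ × List ℕ)) (e0 e1 e2 e3 : EL) : Bool :=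
  extV 4 (fun r => search5 (rows ++ [(4, r)])) rows [] e0 e1 e2 e3

/-- The four rows of the base configuration. -/
def baseRows (a b d e : ℕ) : List (ℕ × List ℕ) :=
  [(0, []), (1, [0]), (2, [d, a]), (3, [0, e, b])]

theorem start1 : search4 (baseRows 0 0 0 0)
    [(0, 1), (2, 3), (0, 2), (0, 3), (1, 2), (1, 3)] [] [] [] = true := by decide +kernel

theorem start2 : search4 (baseRows 0 0 0 1)
    [(0, 1), (2, 3), (0, 2), (0, 3), (1, 2)] [(1, 3)] [] [] = true := by decide +kernel

theorem start3 : search4 (baseRows 0 0 1 1)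
    [(0, 1), (2, 3), (0, 2), (0, 3)] [(1, 2), (1, 3)] [] [] = true := by decide +kernel

theorem start4 : search4 (baseRows 0 1 1 0)
    [(0, 1), (2, 3), (0, 2), (1, 3)] [(0, 3), (1, 2)] [] [] = true := by decide +kernel

theorem start5 : search4 (baseRows 0 1 1 1)
    [(0, 1), (2, 3), (0, 2)] [(0, 3), (1, 2), (1, 3)] [] [] = true := by decide +kernel

theorem start6 : search4 (baseRows 0 1 2 0)
    [(0, 1), (2, 3), (0, 2), (1, 3)] [(0, 3)] [(1, 2)] [] = true := by decide +kernel

theorem start7 : search4 (baseRows 1 1 1 1)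
    [(0, 1), (2, 3)] [(0, 2), (0, 3), (1, 2), (1, 3)] [] [] = true := by decide +kernel

/-! ### Soundness of the search -/

/-- Colors of the edges from `n` to `m-1, ..., 0`. -/
def rowR (C : ℕ → ℕ → ℕ) (n : ℕ) : ℕ → List ℕ
  | 0 => []
  | m + 1 => C m n :: rowR C n m

/-- Natural-number version of a counterexample. -/
structure BadC (C : ℕ → ℕ → ℕ) : Prop where
  lt : ∀ u v, C u v < 4
  gal : ∀ b a n, b < a → a < n → n < 8 →
    C b a = C b n ∨ C b a = C a n ∨ C b n = C a n
  tau : ∀ j < 4, ∀ T : Finset ℕ, T.card ≤ 2 →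
    ∃ u v, u < v ∧ v < 8 ∧ u ∉ T ∧ v ∉ T ∧ C u v = j

theorem okTri_of {x y k : ℕ} (h : x = y ∨ x = k ∨ y = k) : okTri x y k = true := by
  unfold okTri
  cases h1 : Nat.beq x y
  · cases h2 : Nat.beq x k
    · rcases h with h | h | h
      · subst h; simp at h1
      · subst h; simp at h2
      · subst h; simp
    · rfl
  · rfl

theorem cmpRow_rowR {C : ℕ → ℕ → ℕ} (hC : BadC C) (a n : ℕ) (han : a < n) (hn : n < 8) :
    ∀ m, m ≤ a → cmpRow (C a n) (rowR C a m) (rowR C n m) = true := by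
  intro m
  induction m with
  | zero => intro _; rfl
  | succ m ih =>
    intro hm
    change cond (okTri (C m a) (C m n) (C a n))
      (cmpRow (C a n) (rowR C a m) (rowR C n m)) false = true
    rw [okTri_of (hC.gal m a n (by omega) han hn), ih (by omega)]
    rfl

/-- The four edge lists contain all edges satisfying `P`. -/
def Full (C : ℕ → ℕ → ℕ) (P : ℕ → ℕ → Prop) (e0 e1 e2 e3 : EL) : Prop :=
  ∀ u v, P u v → (C u v = 0 → (u, v) ∈ e0) ∧ (C u v = 1 → (u, v) ∈ e1) ∧
    (C u v = 2 → (u, v) ∈ e2) ∧ (C u v = 3 → (u, v) ∈ e3)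

/-- The rows `a, ..., a+m-1`. -/
def rowsFrom (C : ℕ → ℕ → ℕ) : ℕ → ℕ → List (ℕ × List ℕ)
  | _, 0 => []
  | a, m + 1 => (a, rowR C a a) :: rowsFrom C (a + 1) m

theorem rowsFrom_append (C : ℕ → ℕ → ℕ) (m : ℕ) : ∀ a,
    rowsFrom C a m ++ [(a + m, rowR C (a + m) (a + m))] = rowsFrom C a (m + 1) := by
  induction m with
  | zero => intro a; rfl
  | succ m ih =>
    intro a
    have := ih (a + 1)
    rw [show a + 1 + m = a + (m + 1) by omega] at this
    simp only [rowsFrom, List.cons_append] at this ⊢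
    rw [this]

theorem extV_sound {C : ℕ → ℕ → ℕ} (hC : BadC C) (n : ℕ) (hn : n < 8)
    (cont : List ℕ → EL → EL → EL → EL → Bool) (m : ℕ) :
    ∀ a e0 e1 e2 e3, a + m = n →
      Full C (fun u v => u < v ∧ (v < n ∨ v = n ∧ u < a)) e0 e1 e2 e3 →
      extV n cont (rowsFrom C a m) (rowR C n a) e0 e1 e2 e3 = true →
      ∃ f0 f1 f2 f3, Full C (fun u v => u < v ∧ v < n + 1) f0 f1 f2 f3 ∧
        cont (rowR C n n) f0 f1 f2 f3 = true := by
  induction m with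
  | zero =>
    intro a e0 e1 e2 e3 ha hF h
    have : a = n := by omega
    subst this
    refine ⟨e0, e1, e2, e3, ?_, h⟩
    intro u v huv
    exact hF u v ⟨huv.1, by omega⟩
  | succ m ih =>
    intro a e0 e1 e2 e3 ha hF h
    have hc := cmpRow_rowR hC a n (by omega) hn a le_rfl
    have hlt := hC.lt a n
    change cond (cond (cmpRow 0 (rowR C a a) (rowR C n a))
        (extV n cont (rowsFrom C (a + 1) m) (0 :: rowR C n a) ((a, n) :: e0) e1 e2 e3) true)
      (cond (cond (cmpRow 1 (rowR C a a) (rowR C n a))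
        (extV n cont (rowsFrom C (a + 1) m) (1 :: rowR C n a) e0 ((a, n) :: e1) e2 e3) true)
      (cond (cond (cmpRow 2 (rowR C a a) (rowR C n a))
        (extV n cont (rowsFrom C (a + 1) m) (2 :: rowR C n a) e0 e1 ((a, n) :: e2) e3) true)
      (cond (cmpRow 3 (rowR C a a) (rowR C n a))
        (extV n cont (rowsFrom C (a + 1) m) (3 :: rowR C n a) e0 e1 e2 ((a, n) :: e3)) true)
      false) false) false = true at h
    simp only [Bool.cond_false_right, Bool.and_eq_true] at h
    obtain ⟨h0, h1, h2, h3⟩ := h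
    have key : ∀ k, C a n = k → k :: rowR C n a = rowR C n (a + 1) := by
      intro k hk; rw [← hk]; rfl
    have hsplit : ∀ u v, (u < v ∧ (v < n ∨ v = n ∧ u < a + 1)) →
        (u < v ∧ (v < n ∨ v = n ∧ u < a)) ∨ (u = a ∧ v = n) := by
      intro u v h; omega
    have hk : C a n = 0 ∨ C a n = 1 ∨ C a n = 2 ∨ C a n = 3 := by omega
    rcases hk with hk | hk | hk | hk
    · rw [hk] at hc
      rw [hc, key 0 hk] at h0
      refine ih (a + 1) _ _ _ _ (by omega) ?_ h0
      intro u v huv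
      rcases hsplit u v huv with h' | ⟨rfl, rfl⟩
      · have := hF u v h'; simp only [List.mem_cons]; tauto
      · simp [hk]
    · rw [hk] at hc
      rw [hc, key 1 hk] at h1
      refine ih (a + 1) _ _ _ _ (by omega) ?_ h1
      intro u v huv
      rcases hsplit u v huv with h' | ⟨rfl, rfl⟩
      · have := hF u v h'; simp only [List.mem_cons]; tauto
      · simp [hk]
    · rw [hk] at hc
      rw [hc, key 2 hk] at h2
      refine ih (a + 1) _ _ _ _ (by omega) ?_ h2
      intro u v huv
      rcases hsplit u v huv with h' | ⟨rfl, rfl⟩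
      · have := hF u v h'; simp only [List.mem_cons]; tauto
      · simp [hk]
    · rw [hk] at hc
      rw [hc, key 3 hk] at h3
      refine ih (a + 1) _ _ _ _ (by omega) ?_ h3
      intro u v huv
      rcases hsplit u v huv with h' | ⟨rfl, rfl⟩
      · have := hF u v h'; simp only [List.mem_cons]; tauto
      · simp [hk]

/-- A vertex set covers an edge list. -/
def Covers (T : Finset ℕ) (es : EL) : Prop := ∀ e ∈ es, e.1 ∈ T ∨ e.2 ∈ T

theorem mem_delV (u : ℕ) (es : EL) : ∀ e ∈ es, e.1 = u ∨ e.2 = u ∨ e ∈ delV u es := by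
  induction es with
  | nil => simp
  | cons x xs ih =>
    intro e he
    change e.1 = u ∨ e.2 = u ∨ e ∈ cond (Nat.beq x.1 u) (delV u xs)
      (cond (Nat.beq x.2 u) (delV u xs) (x :: delV u xs))
    rcases List.mem_cons.1 he with rfl | he
    · cases h1 : Nat.beq e.1 u
      · cases h2 : Nat.beq e.2 u
        · simp
        · exact Or.inr (Or.inl (Nat.eq_of_beq_eq_true h2))
      · exact Or.inl (Nat.eq_of_beq_eq_true h1)
    · rcases ih e he with h | h | h
      · exact Or.inl h
      · exact Or.inr (Or.inl h)
      · cases Nat.beq x.1 u <;> cases Nat.beq x.2 u <;> simp [h]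

theorem covers_insert {T : Finset ℕ} {u : ℕ} {e : ℕ × ℕ} {es : EL}
    (h : Covers T (delV u es)) (hu : e.1 = u ∨ e.2 = u) : Covers (insert u T) (e :: es) := by
  intro x hx
  rcases List.mem_cons.1 hx with rfl | hx
  · rcases hu with hu | hu <;> simp [hu]
  · rcases mem_delV u es x hx with h' | h' | h'
    · simp [h']
    · simp [h']
    · rcases h x h' with h'' | h'' <;> simp [h'']

theorem cov0_sound (es : EL) (h : cov0 es = true) : ∃ T : Finset ℕ, T.card ≤ 0 ∧ Covers T es := by
  cases es with
  | nil => exact ⟨∅, by simp, by simp [Covers]⟩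
  | cons e es => cases h

theorem cov1_sound (es : EL) (h : cov1 es = true) : ∃ T : Finset ℕ, T.card ≤ 1 ∧ Covers T es := by
  cases es with
  | nil => exact ⟨∅, by simp, by simp [Covers]⟩
  | cons e es =>
    change cond (cov0 (delV e.1 es)) true (cov0 (delV e.2 es)) = true at h
    rw [Bool.cond_true_left, Bool.or_eq_true] at h
    rcases h with h | h
    all_goals
      obtain ⟨T, hT, hc⟩ := cov0_sound _ h
      refine ⟨_, (Finset.card_insert_le _ T).trans (by omega), covers_insert hc (by simp)⟩

theorem cov2_sound (es : EL) (h : cov2 es = true) : ∃ T : Finset ℕ, T.card ≤ 2 ∧ Covers T es := by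
  cases es with
  | nil => exact ⟨∅, by simp, by simp [Covers]⟩
  | cons e es =>
    change cond (cov1 (delV e.1 es)) true (cov1 (delV e.2 es)) = true at h
    rw [Bool.cond_true_left, Bool.or_eq_true] at h
    rcases h with h | h
    all_goals
      obtain ⟨T, hT, hc⟩ := cov1_sound _ h
      refine ⟨_, (Finset.card_insert_le _ T).trans (by omega), covers_insert hc (by simp)⟩

theorem prune_sound {C : ℕ → ℕ → ℕ} (hC : BadC C) (n t : ℕ) (f : EL → Bool)
    (R : Finset ℕ) (hR : ∀ v, n ≤ v → v < 8 → v ∈ R) (hRt : t + R.card ≤ 2)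
    (hf : ∀ es, f es = true → ∃ T : Finset ℕ, T.card ≤ t ∧ Covers T es)
    (e0 e1 e2 e3 : EL) (hF : Full C (fun u v => u < v ∧ v < n) e0 e1 e2 e3)
    (h : prune f e0 e1 e2 e3 = true) : False := by
  have main : ∀ j < 4, ∀ es, f es = true →
      (∀ u v, u < v ∧ v < n → C u v = j → (u, v) ∈ es) → False := by
    intro j hj es hes hmem
    obtain ⟨T, hT, hc⟩ := hf es hes
    obtain ⟨u, v, huv, hv, hu', hv', hj'⟩ := hC.tau j hj (T ∪ R)
      ((Finset.card_union_le _ _).trans (by omega))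
    rw [Finset.mem_union, not_or] at hu' hv'
    have hvn : v < n := by
      by_contra hcon
      exact hv'.2 (hR v (by omega) hv)
    rcases hc _ (hmem u v ⟨huv, hvn⟩ hj') with h' | h'
    · exact hu'.1 h'
    · exact hv'.1 h'
  unfold prune at h
  simp only [Bool.cond_true_left, Bool.or_eq_true] at h
  rcases h with h | h | h | h
  · exact main 3 (by omega) _ h fun u v huv => (hF u v huv).2.2.2
  · exact main 2 (by omega) _ h fun u v huv => (hF u v huv).2.2.1
  · exact main 1 (by omega) _ h fun u v huv => (hF u v huv).2.1
  · exact main 0 (by omega) _ h fun u v huv => (hF u v huv).1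

theorem full_start {C : ℕ → ℕ → ℕ} {n : ℕ} {e0 e1 e2 e3 : EL}
    (hF : Full C (fun u v => u < v ∧ v < n) e0 e1 e2 e3) :
    Full C (fun u v => u < v ∧ (v < n ∨ v = n ∧ u < 0)) e0 e1 e2 e3 := by
  intro u v huv
  exact hF u v ⟨huv.1, by omega⟩

theorem search7_sound {C : ℕ → ℕ → ℕ} (hC : BadC C) (e0 e1 e2 e3 : EL)
    (hF : Full C (fun u v => u < v ∧ v < 7) e0 e1 e2 e3)
    (h : search7 (rowsFrom C 0 7) e0 e1 e2 e3 = true) : False := by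
  unfold search7 at h
  rw [Bool.cond_true_left, Bool.or_eq_true] at h
  rcases h with h | h
  · exact prune_sound hC 7 1 cov1 {7} (by intro v; simp; omega) (by simp) cov1_sound _ _ _ _ hF h
  · obtain ⟨f0, f1, f2, f3, hF', h'⟩ :=
      extV_sound hC 7 (by omega) _ 7 0 _ _ _ _ (by omega) (full_start hF) h
    exact prune_sound hC 8 2 cov2 ∅ (by intro v; omega) (by simp) cov2_sound _ _ _ _ hF' h'

theorem search6_sound {C : ℕ → ℕ → ℕ} (hC : BadC C) (e0 e1 e2 e3 : EL)
    (hF : Full C (fun u v => u < v ∧ v < 6) e0 e1 e2 e3)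
    (h : search6 (rowsFrom C 0 6) e0 e1 e2 e3 = true) : False := by
  unfold search6 at h
  rw [Bool.cond_true_left, Bool.or_eq_true] at h
  rcases h with h | h
  · exact prune_sound hC 6 0 cov0 {6, 7} (by intro v; simp; omega) (by simp) cov0_sound
      _ _ _ _ hF h
  · obtain ⟨f0, f1, f2, f3, hF', h'⟩ :=
      extV_sound hC 6 (by omega) _ 6 0 _ _ _ _ (by omega) (full_start hF) h
    exact search7_sound hC _ _ _ _ hF' h'

theorem search5_sound {C : ℕ → ℕ → ℕ} (hC : BadC C) (e0 e1 e2 e3 : EL)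
    (hF : Full C (fun u v => u < v ∧ v < 5) e0 e1 e2 e3)
    (h : search5 (rowsFrom C 0 5) e0 e1 e2 e3 = true) : False := by
  obtain ⟨f0, f1, f2, f3, hF', h'⟩ :=
    extV_sound hC 5 (by omega) _ 5 0 _ _ _ _ (by omega) (full_start hF) h
  exact search6_sound hC _ _ _ _ hF' h'

theorem search4_sound {C : ℕ → ℕ → ℕ} (hC : BadC C) (e0 e1 e2 e3 : EL)
    (hF : Full C (fun u v => u < v ∧ v < 4) e0 e1 e2 e3)
    (h : search4 (rowsFrom C 0 4) e0 e1 e2 e3 = true) : False := by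
  obtain ⟨f0, f1, f2, f3, hF', h'⟩ :=
    extV_sound hC 4 (by omega) _ 4 0 _ _ _ _ (by omega) (full_start hF) h
  exact search5_sound hC _ _ _ _ hF' h'

theorem base_sound {C : ℕ → ℕ → ℕ} (hC : BadC C) (a b d e : ℕ) (e0 e1 e2 e3 : EL)
    (h01 : C 0 1 = 0) (h23 : C 2 3 = 0) (h02 : C 0 2 = a) (h03 : C 0 3 = b)
    (h12 : C 1 2 = d) (h13 : C 1 3 = e)
    (hF : Full C (fun u v => u < v ∧ v < 4) e0 e1 e2 e3)
    (h : search4 (baseRows a b d e) e0 e1 e2 e3 = true) : False := by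
  refine search4_sound hC e0 e1 e2 e3 hF ?_
  rw [← h]
  simp [rowsFrom, rowR, baseRows, h01, h23, h02, h03, h12, h13]

theorem full4 {C : ℕ → ℕ → ℕ} {e0 e1 e2 e3 : EL}
    (h : ∀ p ∈ [(0, 1), (2, 3), (0, 2), (0, 3), (1, 2), (1, 3)],
      (C p.1 p.2 = 0 → p ∈ e0) ∧ (C p.1 p.2 = 1 → p ∈ e1) ∧
      (C p.1 p.2 = 2 → p ∈ e2) ∧ (C p.1 p.2 = 3 → p ∈ e3)) :
    Full C (fun u v => u < v ∧ v < 4) e0 e1 e2 e3 := by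
  rintro u v ⟨h1, h2⟩
  refine h (u, v) ?_
  interval_cases v <;> interval_cases u <;> simp

/-- The base configurations up to symmetry. -/
def reps : List (ℕ × ℕ × ℕ × ℕ) :=
  [(0, 0, 0, 0), (0, 0, 0, 1), (0, 0, 1, 1), (0, 1, 1, 0), (0, 1, 1, 1), (0, 1, 2, 0),
    (1, 1, 1, 1)]

theorem reps_sound {C : ℕ → ℕ → ℕ} (hC : BadC C) (h01 : C 0 1 = 0) (h23 : C 2 3 = 0)
    (h : (C 0 2, C 0 3, C 1 2, C 1 3) ∈ reps) : False := by
  simp only [reps, List.mem_cons, Prod.mk.injEq, List.not_mem_nil, or_false] at h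
  rcases h with h | h | h | h | h | h | h <;> obtain ⟨h02, h03, h12, h13⟩ := h
  · exact base_sound hC _ _ _ _ _ _ _ _ h01 h23 h02 h03 h12 h13
      (full4 (by simp [h01, h23, h02, h03, h12, h13])) start1
  · exact base_sound hC _ _ _ _ _ _ _ _ h01 h23 h02 h03 h12 h13
      (full4 (by simp [h01, h23, h02, h03, h12, h13])) start2
  · exact base_sound hC _ _ _ _ _ _ _ _ h01 h23 h02 h03 h12 h13
      (full4 (by simp [h01, h23, h02, h03, h12, h13])) start3
  · exact base_sound hC _ _ _ _ _ _ _ _ h01 h23 h02 h03 h12 h13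
      (full4 (by simp [h01, h23, h02, h03, h12, h13])) start4
  · exact base_sound hC _ _ _ _ _ _ _ _ h01 h23 h02 h03 h12 h13
      (full4 (by simp [h01, h23, h02, h03, h12, h13])) start5
  · exact base_sound hC _ _ _ _ _ _ _ _ h01 h23 h02 h03 h12 h13
      (full4 (by simp [h01, h23, h02, h03, h12, h13])) start6
  · exact base_sound hC _ _ _ _ _ _ _ _ h01 h23 h02 h03 h12 h13
      (full4 (by simp [h01, h23, h02, h03, h12, h13])) start7

/-! ### Reduction to the base configurations -/

/-- Every color class needs at least three covering vertices. -/
def Hard (c : Fin 8 → Fin 8 → Fin 4) : Prop :=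
  ∀ j, ∀ T : Finset (Fin 8), T.card ≤ 2 → ∃ x y, x ≠ y ∧ x ∉ T ∧ y ∉ T ∧ c x y = j

theorem reps_contra (c : Fin 8 → Fin 8 → Fin 4) (hG : IsGallai c) (hH : Hard c)
    (g : Equiv.Perm (Fin 8)) (σ : Equiv.Perm (Fin 4))
    (h01 : (σ (c (g 0) (g 1))).val = 0) (h23 : (σ (c (g 2) (g 3))).val = 0)
    (h : ((σ (c (g 0) (g 2))).val, (σ (c (g 0) (g 3))).val, (σ (c (g 1) (g 2))).val,
      (σ (c (g 1) (g 3))).val) ∈ reps) : False := by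
  refine reps_sound (C := fun u v => (σ (c (g (Fin.ofNat 8 u)) (g (Fin.ofNat 8 v)))).val)
    ⟨fun u v => Fin.isLt _, ?_, ?_⟩ h01 h23 h
  · intro b a n hba han hn
    have ne : ∀ u v, u < v → v < 8 → g (Fin.ofNat 8 u) ≠ g (Fin.ofNat 8 v) := by
      intro u v huv hv heq
      have := congrArg Fin.val (g.injective heq)
      simp only [Fin.val_ofNat] at this
      omega
    have := hG.2 _ _ _ (ne b a hba (by omega)) (ne b n (by omega) hn) (ne a n han hn)
    simp only [Fin.val_inj, σ.injective.eq_iff]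
    tauto
  · intro j hj T hT
    obtain ⟨x, y, hxy, hx, hy, hc⟩ := hH (σ.symm ⟨j, hj⟩) (T.image fun u => g (Fin.ofNat 8 u))
      (Finset.card_image_le.trans hT)
    have hofx : ∀ z : Fin 8, Fin.ofNat 8 z.val = z := by
      intro z; ext; simp
    have hmem : ∀ z : Fin 8, z ∉ T.image (fun u => g (Fin.ofNat 8 u)) →
        (g.symm z).val ∉ T := by
      intro z hz hzT
      exact hz (Finset.mem_image.2 ⟨_, hzT, by rw [hofx]; simp⟩)
    have hne : (g.symm x).val ≠ (g.symm y).val := by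
      intro h; exact hxy (g.symm.injective (Fin.ext h))
    rcases lt_or_gt_of_ne hne with hlt | hlt
    · refine ⟨_, _, hlt, Fin.isLt _, hmem x hx, hmem y hy, ?_⟩
      simp [hc]
    · refine ⟨_, _, hlt, Fin.isLt _, hmem y hy, hmem x hx, ?_⟩
      have hc' : c y x = σ.symm ⟨j, hj⟩ := by rw [hG.1]; exact hc
      simp [hc']

theorem exists_perm (v : Fin 4 → Fin 8) (hv : Function.Injective v) :
    ∃ g : Equiv.Perm (Fin 8), g 0 = v 0 ∧ g 1 = v 1 ∧ g 2 = v 2 ∧ g 3 = v 3 := by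
  obtain ⟨g, hg⟩ := (Equiv.Perm.isMultiplyPretransitive (Fin 8) 4).exists_smul_eq
    (Fin.castLEEmb (by omega : 4 ≤ 8)) ⟨v, hv⟩
  refine ⟨g, ?_, ?_, ?_, ?_⟩
  · exact DFunLike.congr_fun hg 0
  · exact DFunLike.congr_fun hg 1
  · exact DFunLike.congr_fun hg 2
  · exact DFunLike.congr_fun hg 3

/-- After a color permutation fixing `0` we see a base configuration. -/
def RepOk (a b d e : Fin 4) : Prop :=
  ∃ σ : Equiv.Perm (Fin 4), (σ 0).val = 0 ∧ ((σ a).val, (σ b).val, (σ d).val, (σ e).val) ∈ reps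

theorem repOk_contra (c : Fin 8 → Fin 8 → Fin 4) (hG : IsGallai c) (hH : Hard c)
    (x y z w : Fin 8) (hd : [x, y, z, w].Nodup) (h01 : c x y = 0) (h23 : c z w = 0)
    (h : RepOk (c x z) (c x w) (c y z) (c y w)) : False := by
  obtain ⟨σ, h0, h⟩ := h
  obtain ⟨g, g0, g1, g2, g3⟩ := exists_perm ![x, y, z, w] (by
    have := List.nodup_iff_injective_get.1 hd
    intro i j hij
    apply this
    revert hij
    fin_cases i <;> fin_cases j <;> simp)
  simp only [Matrix.cons_val] at g0 g1 g2 g3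
  refine reps_contra c hG hH g σ ?_ ?_ ?_
  · rw [g0, g1, h01, h0]
  · rw [g2, g3, h23, h0]
  · rw [g0, g1, g2, g3]; exact h

/-- Two of the three colors agree. -/
def Tri (a b d : Fin 4) : Prop := a = b ∨ a = d ∨ b = d

instance (a b d : Fin 4) : Decidable (Tri a b d) := by unfold Tri; infer_instance

instance (a b d e : Fin 4) : Decidable (RepOk a b d e) := by unfold RepOk; infer_instance

theorem repOk_all : ∀ a b d e : Fin 4, Tri 0 a d → Tri 0 b e → Tri 0 a b → Tri 0 d e →
    RepOk a b d e ∨ RepOk d e a b ∨ RepOk b a e d ∨ RepOk e d b a ∨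
    RepOk a d b e ∨ RepOk d a e b ∨ RepOk b e a d ∨ RepOk e b d a := by
  decide +kernel

theorem hard_contra (c : Fin 8 → Fin 8 → Fin 4) (hG : IsGallai c) (hH : Hard c) : False := by
  obtain ⟨x, y, hxy, -, -, h01⟩ := hH 0 ∅ (by simp)
  obtain ⟨z, w, hzw, hz, hw, h23⟩ := hH 0 {x, y} (Finset.card_le_two)
  simp only [Finset.mem_insert, Finset.mem_singleton, not_or] at hz hw
  obtain ⟨hzx, hzy⟩ := hz
  obtain ⟨hwx, hwy⟩ := hw
  have tri : ∀ p q r, p ≠ q → p ≠ r → q ≠ r → Tri (c p q) (c p r) (c q r) := by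
    intro p q r h1 h2 h3
    have := hG.2 p q r h1 h2 h3
    unfold Tri; tauto
  have s := hG.1
  have t1 := tri x y z hxy (Ne.symm hzx) (Ne.symm hzy)
  have t2 := tri x y w hxy (Ne.symm hwx) (Ne.symm hwy)
  have t3 := tri z w x hzw hzx hwx
  have t4 := tri z w y hzw hzy hwy
  rw [h01] at t1 t2
  rw [h23, s z x, s w x] at t3
  rw [h23, s z y, s w y] at t4
  have h10 : c y x = 0 := by rw [s]; exact h01
  have h32 : c w z = 0 := by rw [s]; exact h23
  have szx := s z x
  have szy := s z y
  have swx := s w x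
  have swy := s w y
  have hyx := Ne.symm hxy
  have hwz := Ne.symm hzw
  have hxz := Ne.symm hzx
  have hxw := Ne.symm hwx
  have hyz := Ne.symm hzy
  have hyw := Ne.symm hwy
  rcases repOk_all _ _ _ _ t1 t2 t3 t4 with h | h | h | h | h | h | h | h
  · exact repOk_contra c hG hH x y z w (by simp [*]) h01 h23 h
  · exact repOk_contra c hG hH y x z w (by simp [*]) h10 h23 h
  · exact repOk_contra c hG hH x y w z (by simp [*]) h01 h32 h
  · exact repOk_contra c hG hH y x w z (by simp [*]) h10 h32 h
  · exact repOk_contra c hG hH z w x y (by simp [*]) h23 h01 (by rwa [szx, szy, swx, swy])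
  · exact repOk_contra c hG hH z w y x (by simp [*]) h23 h10 (by rwa [szx, szy, swx, swy])
  · exact repOk_contra c hG hH w z x y (by simp [*]) h32 h01 (by rwa [szx, szy, swx, swy])
  · exact repOk_contra c hG hH w z y x (by simp [*]) h32 h10 (by rwa [szx, szy, swx, swy])

theorem upper_s17 (c : Fin 8 → Fin 8 → Fin 4) (hG : IsGallai c) :
    ∃ S : Finset (Fin 8), S.card = 6 ∧ (colorsOn c S).card ≤ 3 := by
  by_contra hno
  refine hard_contra c hG ?_
  intro j T hT
  by_contra hcon
  apply hno
  obtain ⟨S, hS, hS6⟩ := Finset.exists_subset_card_eq (s := Tᶜ) (n := 6) (by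
    rw [Finset.card_compl, Fintype.card_fin]; omega)
  refine ⟨S, hS6, ?_⟩
  have : colorsOn c S ⊆ Finset.univ.erase j := by
    intro k hk
    simp only [colorsOn, Finset.mem_image, Finset.mem_filter, Finset.mem_product] at hk
    obtain ⟨⟨x, y⟩, ⟨⟨hx, hy⟩, hne⟩, rfl⟩ := hk
    refine Finset.mem_erase.2 ⟨?_, Finset.mem_univ _⟩
    intro hj
    exact hcon ⟨x, y, hne, Finset.mem_compl.1 (hS hx), Finset.mem_compl.1 (hS hy), hj⟩
  refine (Finset.card_le_card this).trans ?_
  rw [Finset.card_erase_of_mem (Finset.mem_univ _)]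
  simp

/-! ### The lower bound -/

/-- Vertices `0, 1, 2` form a triangle of color `3`, vertices `3, 4, 5, 6` a path of color `1` whose
complement is a path of color `2`, and all other edges have color `0`. -/
def low (x y : Fin 7) : Fin 4 :=
  if x.val < 3 then (if y.val < 3 then 3 else 0)
  else if y.val < 3 then 0
  else if x.val + 1 = y.val ∨ y.val + 1 = x.val then 1 else 2

theorem low_gallai : IsGallai low := by
  unfold IsGallai
  constructor
  · decide +kernel
  · decide +kernel

theorem low_colors : ∀ S : Finset (Fin 7), S.card = 6 → 4 ≤ (colorsOn low S).card := by
  decide +kernel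

theorem not_small (n : ℕ) (hn : n ≤ 7) (h : ∀ c : Fin n → Fin n → Fin 4, IsGallai c →
    ∃ S : Finset (Fin n), S.card = 6 ∧ (colorsOn c S).card ≤ 3) : False := by
  have hi := Fin.castLE_injective hn
  obtain ⟨S, hS, hc⟩ := h (fun x y => low (Fin.castLE hn x) (Fin.castLE hn y)) (by
    refine ⟨fun a b => low_gallai.1 _ _, fun a b d h1 h2 h3 => ?_⟩
    exact low_gallai.2 _ _ _ (hi.ne h1) (hi.ne h2) (hi.ne h3))
  have h4 := low_colors (S.map (Fin.castLEEmb hn)) (by simpa using hS)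
  have : colorsOn low (S.map (Fin.castLEEmb hn)) ⊆
      colorsOn (fun x y => low (Fin.castLE hn x) (Fin.castLE hn y)) S := by
    intro k hk
    simp only [colorsOn, Finset.mem_image, Finset.mem_filter, Finset.mem_product,
      Finset.mem_map] at hk ⊢
    obtain ⟨⟨x, y⟩, ⟨⟨⟨x', hx, rfl⟩, ⟨y', hy, rfl⟩⟩, hne⟩, rfl⟩ := hk
    refine ⟨(x', y'), ⟨⟨hx, hy⟩, ?_⟩, rfl⟩
    rintro heq
    exact hne (congrArg (Fin.castLEEmb hn) heq)
  have := Finset.card_le_card this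
  omega

theorem gallaiNum_four_three_six :
    gallaiNum 4 3 6 = 8 ∧
    (∀ c : Fin 8 → Fin 8 → Fin 4, IsGallai c →
      ∃ S : Finset (Fin 8), S.card = 6 ∧ (colorsOn c S).card ≤ 3) ∧
    (∃ c : Fin 7 → Fin 7 → Fin 4, IsGallai c ∧
      ∀ S : Finset (Fin 7), S.card = 6 → 4 ≤ (colorsOn c S).card) := by
  refine ⟨?_, upper_s17, low, low_gallai, low_colors⟩
  unfold gallaiNum
  apply le_antisymm
  · exact Nat.sInf_le ⟨by omega, upper_s17⟩
  · refine le_csInf ⟨8, by omega, upper_s17⟩ ?_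
    rintro n ⟨-, h⟩
    by_contra hn
    exact not_small n (by omega) h
end
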